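/- For every oracle machine M, the measure of the class of X ∈ 2^ω such that M(X) is total and is the characteristic function of a cofinite subset of ℕ is not a 3-random real number. Likewise, for every monotone machine N, the measure of the class of X such that N(X) is a stream of the form σ∗1^ω (and similarly, such that N(X) is a computable stream) is not 3-random. -/

import Mathlib

open scoped Classical
open MeasureTheory

namespace RandProb

/-- Cantor space: the space of infinite binary sequences. -/
abbrev Cantor := ℕ → Bool

/-! ### Oracle partial recursive functions, via codes -/

/-- Codes for partial recursive functions with access to an oracle `O : ℕ → ℕ`.
These codes play the role of (oracle) Turing machines. -/
inductive CodeO : Type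
  | zero : CodeO
  | succ : CodeO
  | left : CodeO
  | right : CodeO
  | oracle : CodeO
  | pair : CodeO → CodeO → CodeO
  | comp : CodeO → CodeO → CodeO
  | prec : CodeO → CodeO → CodeO
  | rfind' : CodeO → CodeO

/-- Evaluation of an oracle code with (total) oracle `O`. -/
def CodeO.eval (O : ℕ → ℕ) : CodeO → ℕ →. ℕ
  | .zero => pure 0
  | .succ => Nat.succ
  | .left => ↑fun n : ℕ => n.unpair.1
  | .right => ↑fun n : ℕ => n.unpair.2
  | .oracle => ↑fun n : ℕ => O n
  | .pair cf cg => fun n => Nat.pair <$> cf.eval O n <*> cg.eval O n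
  | .comp cf cg => fun n => cg.eval O n >>= cf.eval O
  | .prec cf cg =>
    Nat.unpaired fun a n =>
      n.rec (cf.eval O a) fun y IH => do
        let i ← IH
        cg.eval O (Nat.pair a (Nat.pair y i))
  | .rfind' cf =>
    Nat.unpaired fun a m =>
      (Nat.rfind fun n => (fun m => m = 0) <$> cf.eval O (Nat.pair a (n + m))).map (· + m)

/-- A canonical injective numbering of oracle codes. -/
def CodeO.encode : CodeO → ℕ
  | .zero => 0
  | .succ => 1
  | .left => 2
  | .right => 3
  | .oracle => 4
  | .pair cf cg => 2 * (2 * Nat.pair cf.encode cg.encode) + 5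
  | .comp cf cg => 2 * (2 * Nat.pair cf.encode cg.encode + 1) + 5
  | .prec cf cg => 2 * (2 * Nat.pair cf.encode cg.encode) + 6
  | .rfind' cf => 2 * (2 * cf.encode + 1) + 6

/-- The Turing jump of an oracle: the halting problem relative to `O`,
as a `{0,1}`-valued function. -/
noncomputable def jump (O : ℕ → ℕ) : ℕ → ℕ := fun e =>
  if ∃ c : CodeO, c.encode = e ∧ (c.eval O e).Dom then 1 else 0

/-- `iterJump n` is `∅^(n)`, the `n`-th iterate of the halting problem (as an oracle). -/
noncomputable def iterJump : ℕ → ℕ → ℕ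
  | 0 => fun _ => 0
  | n + 1 => jump (iterJump n)

/-- `S ⊆ ℕ` is computably enumerable relative to the oracle `O`. -/
def CeIn (O : ℕ → ℕ) (S : Set ℕ) : Prop := ∃ c : CodeO, S = {m | (c.eval O m).Dom}

/-- The left Dedekind cut of `α` (as a set of codes of rationals) is c.e. in `O`. -/
def LeftCeIn (O : ℕ → ℕ) (α : ℝ) : Prop :=
  CeIn O {m | ∃ q : ℚ, Encodable.encode q = m ∧ (q : ℝ) < α}

/-- The right Dedekind cut of `α` (as a set of codes of rationals) is c.e. in `O`. -/
def RightCeIn (O : ℕ → ℕ) (α : ℝ) : Prop :=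
  CeIn O {m | ∃ q : ℚ, Encodable.encode q = m ∧ α < (q : ℝ)}

/-! ### Martin-Löf randomness for real numbers -/

/-- The `i`-th component of a Martin-Löf test coded by the set `W ⊆ ℕ`:
the union of all open rational intervals whose codes are enumerated into the
`i`-th section of `W`. -/
def testSet (W : Set ℕ) (i : ℕ) : Set ℝ :=
  {x | ∃ p q : ℚ, Nat.pair i (Encodable.encode (p, q)) ∈ W ∧ (p : ℝ) < x ∧ x < (q : ℝ)}

/-- `α` is Martin-Löf random relative to the oracle `O`. -/
def MLRandomIn (O : ℕ → ℕ) (α : ℝ) : Prop :=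
  ∀ W : Set ℕ, CeIn O W →
    (∀ i, volume (testSet W i) ≤ ENNReal.ofReal ((2 : ℝ)⁻¹ ^ i)) →
    ∃ i, α ∉ testSet W i

/-- `α` is `n`-random: Martin-Löf random relative to `∅^(n-1)`. -/
def NRandom (n : ℕ) (α : ℝ) : Prop := MLRandomIn (iterJump (n - 1)) α

/-! ### The uniform measure on Cantor space -/

/-- The binary digits of a real number (meaningful on `[0,1)`). -/
noncomputable def digits (x : ℝ) : Cantor := fun n => decide (⌊x * 2 ^ (n + 1)⌋ % 2 = 1)

/-- The uniform (Lebesgue) product measure on Cantor space, obtained as the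
pushforward of Lebesgue measure on `[0,1)` under the binary-digit map. -/
noncomputable def mu : Measure Cantor :=
  Measure.map digits (volume.restrict (Set.Ico (0 : ℝ) 1))

/-- The uniform measure of a set of elements of Cantor space, as a real number. -/
noncomputable def muR (S : Set Cantor) : ℝ := (mu S).toReal

/-! ### Strings, prefixes and cylinders -/

/-- The length-`n` initial segment of `X ∈ 2^ω`, as a finite binary string. -/
def initSeg (X : Cantor) (n : ℕ) : List Bool := (List.range n).map X

/-- `⟦S⟧`: the elements of Cantor space having a prefix in the set of strings `S`. -/
def cyl (S : Set (List Bool)) : Set Cantor := {X | ∃ n, initSeg X n ∈ S}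

/-- A set of strings is prefix-free if none of its elements properly extends another. -/
def IsPrefixFree (S : Set (List Bool)) : Prop := ∀ σ ∈ S, ∀ τ ∈ S, σ <+: τ → σ = τ

/-- A set of strings is upward closed if it is closed under taking extensions. -/
def UpClosed (S : Set (List Bool)) : Prop := ∀ σ ∈ S, ∀ τ, σ <+: τ → τ ∈ S

/-- Two strings are compatible if one is a prefix of the other. -/
def Compatible (σ τ : List Bool) : Prop := σ <+: τ ∨ τ <+: σ

/-! ### Oracle machines -/

/-- An element of Cantor space viewed as a `{0,1}`-valued oracle. -/
def oX (X : Cantor) : ℕ → ℕ := fun n => cond (X n) 1 0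

/-- `evalO X c n`: the (possibly divergent) output of the oracle machine `c`
on input `n` with oracle `X`. -/
def evalO (X : Cantor) (c : CodeO) (n : ℕ) : Part ℕ := c.eval (oX X) n

/-- The oracle obtained by writing the string `ρ` before the bits of `X`. -/
def prepend (ρ : List Bool) (X : Cantor) : Cantor := fun n =>
  if n < ρ.length then ρ.getD n false else X (n - ρ.length)

/-- `X ∈ 2^ω` extends the finite string `ρ`. -/
def Extends (X : Cantor) (ρ : List Bool) : Prop := initSeg X ρ.length = ρ

/-- `u` is a universal oracle machine: some effective, prefix-free translation
`c ↦ σ_c` satisfies `u(σ_c * X, n) ≃ c(X, n)` for all machines `c`. -/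
def UniversalOM (u : CodeO) : Prop :=
  ∃ σ : CodeO → List Bool,
    (∃ f : ℕ → ℕ, Computable f ∧ ∀ c : CodeO, f c.encode = Encodable.encode (σ c)) ∧
    IsPrefixFree (Set.range σ) ∧
    ∀ (c : CodeO) (X : Cantor) (n : ℕ), evalO (prepend (σ c) X) u n = evalO X c n

/-- `TOT(c)`: the oracles `X` such that the function `c(X)` is total. -/
def TOT (c : CodeO) : Set Cantor := {X | ∀ n, (evalO X c n).Dom}

/-- The domain of the partial function `c(X)`. -/
def domSet (c : CodeO) (X : Cantor) : Set ℕ := {n | (evalO X c n).Dom}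

/-- The range of the partial function `c(X)`. -/
def ranSet (c : CodeO) (X : Cantor) : Set ℕ := {v | ∃ n, v ∈ evalO X c n}

/-- `INF(c)`: the oracles `X` such that `c(X)` has infinite domain. -/
def INF (c : CodeO) : Set Cantor := {X | (domSet c X).Infinite}

/-- `COF(c)`: the oracles `X` such that `c(X)` has cofinite domain. -/
def COF (c : CodeO) : Set Cantor := {X | (domSet c X)ᶜ.Finite}

/-- `COM(c)`: the oracles `X` such that `c(X)` has computable domain. -/
def COM (c : CodeO) : Set Cantor := {X | ComputablePred fun n => n ∈ domSet c X}

/-- The characteristic function of a set of naturals. -/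
noncomputable def chi (A : Set ℕ) : ℕ → ℕ := fun n => if n ∈ A then 1 else 0

/-- Turing reducibility between sets of naturals. -/
def TuringLEs (B A : Set ℕ) : Prop := ∃ c : CodeO, ∀ n, c.eval (chi A) n = Part.some (chi B n)

/-- The halting problem `∅'` as a set of naturals. -/
noncomputable def HaltingSet : Set ℕ := {e | iterJump 1 e = 1}

/-- `COMPL(c)`: the oracles `X` such that the domain of `c(X)` computes the halting problem. -/
noncomputable def COMPL (c : CodeO) : Set Cantor := {X | TuringLEs HaltingSet (domSet c X)}

/-- Turing reducibility between total functions on ℕ. -/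
def TuringLEf (f g : ℕ → ℕ) : Prop := ∃ c : CodeO, ∀ n, c.eval g n = Part.some (f n)

/-- A real number viewed as an oracle, via its binary expansion. -/
noncomputable def realOracle (α : ℝ) : ℕ → ℕ := oX (digits α)

/-- Two reals have Turing-incomparable degrees. -/
noncomputable def TIncompReal (α β : ℝ) : Prop :=
  ¬ TuringLEf (realOracle α) (realOracle β) ∧ ¬ TuringLEf (realOracle β) (realOracle α)

/-! ### Arithmetical hierarchy -/

/-- Evaluation with the trivial (empty) oracle: ordinary partial recursion. -/
def eval0 (c : CodeO) : ℕ →. ℕ := c.eval fun _ => 0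

/-- `SigmaNumIdx n c` is the `Σ^0_{n+1}` subset of `ℕ` with index `c`. -/
def SigmaNumIdx : ℕ → CodeO → Set ℕ
  | 0, c => {m | (eval0 c m).Dom}
  | n + 1, c => {m | ∃ k, Nat.pair m k ∉ SigmaNumIdx n c}

/-- `S ⊆ ℕ` is `Σ^0_n` (intended for `n ≥ 1`). -/
def SigmaN (n : ℕ) (S : Set ℕ) : Prop := ∃ c : CodeO, S = SigmaNumIdx (n - 1) c

/-- The set of codes of the elements of a set of binary strings. -/
def strCodes (S : Set (List Bool)) : Set ℕ := {m | ∃ σ ∈ S, Encodable.encode σ = m}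

/-- A set of binary strings is `Σ^0_n`. -/
def SigmaStr (n : ℕ) (S : Set (List Bool)) : Prop := SigmaN n (strCodes S)

/-- A set of binary strings is `Π^0_n`: its complement is `Σ^0_n`. -/
def PiStr (n : ℕ) (S : Set (List Bool)) : Prop := SigmaStr n Sᶜ

/-- A set of binary strings is c.e. relative to the oracle `O`. -/
def CeStrIn (O : ℕ → ℕ) (S : Set (List Bool)) : Prop := CeIn O (strCodes S)

/-- `SigmaClassIdx n c m` is the `Σ^0_{n+1}` class of elements of Cantor space
with index `c` and parameter `m`. -/
def SigmaClassIdx : ℕ → CodeO → ℕ → Set Cantor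
  | 0, c, m => {X | (evalO X c m).Dom}
  | n + 1, c, m => {X | ∃ k, X ∉ SigmaClassIdx n c (Nat.pair m k)}

/-! ### Monotone machines -/

/-- A monotone machine: a partial computable, monotone map on finite binary strings. -/
structure MonoMachine where
  f : List Bool →. List Bool
  partrec : Partrec f
  mono : ∀ ⦃σ τ a b : List Bool⦄, σ <+: τ → a ∈ f σ → b ∈ f τ → a <+: b

/-- The oracles `X` such that the output of the monotone machine on `X` is infinite. -/
def MonoINF (M : MonoMachine) : Set Cantor :=
  {X | ∀ k, ∃ n a, a ∈ M.f (initSeg X n) ∧ k ≤ a.length}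

/-- The `k`-th bit of the output `M(X)` of a monotone machine is `b`. -/
def MonoMachine.hasBit (M : MonoMachine) (X : Cantor) (k : ℕ) (b : Bool) : Prop :=
  ∃ n a, a ∈ M.f (initSeg X n) ∧ a[k]? = some b

/-- `U` is a universal monotone machine. -/
def UniversalMono (U : MonoMachine) : Prop :=
  ∃ (M : ℕ → MonoMachine) (σ : ℕ → List Bool),
    Partrec₂ (fun (e : ℕ) (τ : List Bool) => (M e).f τ) ∧
    (∀ V : MonoMachine, ∃ e, (M e).f = V.f) ∧
    Computable σ ∧ IsPrefixFree (Set.range σ) ∧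
    ∀ e τ, U.f (σ e ++ τ) = (M e).f τ

/-! ### Infinitary self-delimiting machines -/

/-- Chaitin's infinitary self-delimiting machines: `f σ n` is the `n`-th approximation
of the output on program `σ` (`none` meaning divergence); the convergence relation is
decidable, approximations are monotone, and machines are self-delimiting. -/
structure InfMachine where
  f : List Bool → ℕ → Option (List Bool)
  computable : Computable₂ f
  mono : ∀ σ m n a, n < m → f σ m = some a → ∃ b, f σ n = some b ∧ b <+: a
  sd : ∀ σ τ n a, f σ n = some a → f (σ ++ τ) n = some a

/-- `M^∞(σ)↓`: all approximations converge. -/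
def InfMachine.domInf (M : InfMachine) (σ : List Bool) : Prop := ∀ n, M.f σ n ≠ none

/-- The domain of `M^∞`. -/
def InfMachine.DOM (M : InfMachine) : Set (List Bool) := {σ | M.domInf σ}

/-- The output `M^∞(σ)` is infinite (a stream). -/
def InfMachine.outInf (M : InfMachine) (σ : List Bool) : Prop :=
  ∀ k, ∃ n a, M.f σ n = some a ∧ k ≤ a.length

/-- `FIN(M^∞)`: programs in the domain with finite output. -/
def InfMachine.FIN (M : InfMachine) : Set (List Bool) := {σ | M.domInf σ ∧ ¬ M.outInf σ}

/-- `INF(M^∞)`: programs in the domain with infinite output. -/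
def InfMachine.INF (M : InfMachine) : Set (List Bool) := {σ | M.domInf σ ∧ M.outInf σ}

/-- The `k`-th bit of the output `M^∞(σ)` is `b`. -/
def InfMachine.hasBit (M : InfMachine) (σ : List Bool) (k : ℕ) (b : Bool) : Prop :=
  ∃ n a, M.f σ n = some a ∧ a[k]? = some b

/-- The domain of the prefix-free machine `M^*`: minimal strings in the domain of `M^∞`. -/
def InfMachine.DOMstar (M : InfMachine) : Set (List Bool) :=
  {σ | M.domInf σ ∧ ∀ τ, τ <+: σ → τ ≠ σ → ¬ M.domInf τ}

/-- Programs whose output is a stream with a tail of 1s. -/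
def InfMachine.COFout (M : InfMachine) : Set (List Bool) :=
  {σ | M.domInf σ ∧ M.outInf σ ∧ ∃ t, ∀ k, t ≤ k → M.hasBit σ k true}

/-- `A^∞(σ) ≃ B^∞(τ)`: both converge or both diverge, with equal outputs. -/
def InfAgree (A : InfMachine) (σ : List Bool) (B : InfMachine) (τ : List Bool) : Prop :=
  (A.domInf σ ↔ B.domInf τ) ∧ (A.domInf σ → ∀ k b, (A.hasBit σ k b ↔ B.hasBit τ k b))

/-- `U` is a universal infinitary self-delimiting machine. -/
def UniversalInf (U : InfMachine) : Prop :=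
  ∃ (M : ℕ → InfMachine) (σ : ℕ → List Bool),
    Computable (fun p : ℕ × List Bool × ℕ => (M p.1).f p.2.1 p.2.2) ∧
    (∀ V : InfMachine, ∃ e, ∀ τ, InfAgree (M e) τ V τ) ∧
    Computable σ ∧ IsPrefixFree (Set.range σ) ∧
    ∀ e τ, InfAgree U (σ e ++ τ) (M e) τ

end RandProb

namespace RandProb

/-! ### Toolkit for r.e. predicates -/

section RE
variable {α β : Type*} [Primcodable α] [Primcodable β]

theorem re_stage {p : α → Prop} (hp : REPred p) :
    ∃ D : α → ℕ → Bool, Primrec₂ D ∧ (∀ a, p a ↔ ∃ s, D a s = true) ∧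
      ∀ a s t, s ≤ t → D a s = true → D a t = true := by
  obtain ⟨c, hc⟩ := Nat.Partrec.Code.exists_code.1 hp
  refine ⟨fun a s => (Nat.Partrec.Code.evaln s c (Encodable.encode a)).isSome, ?_, ?_, ?_⟩
  · exact Primrec.option_isSome.comp (Nat.Partrec.Code.primrec_evaln.comp
      ((Primrec.snd.pair (Primrec.const c)).pair (Primrec.encode.comp Primrec.fst)))
  · intro a
    have h1 : p a ↔ (Nat.Partrec.Code.eval c (Encodable.encode a)).Dom := by
      rw [hc]; simp [Part.dom_iff_mem]
    rw [h1, Part.dom_iff_mem]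
    simp only [Nat.Partrec.Code.evaln_complete, Option.isSome_iff_exists]
    constructor
    · rintro ⟨y, s, h⟩; exact ⟨s, y, h⟩
    · rintro ⟨s, y, h⟩; exact ⟨y, s, h⟩
  · intro a s t hst h
    simp only [Option.isSome_iff_exists] at h ⊢
    obtain ⟨y, hy⟩ := h
    exact ⟨y, Nat.Partrec.Code.evaln_mono hst hy⟩

theorem re_of_stage {D : α → ℕ → Bool} (hD : Computable₂ D) :
    REPred fun a => ∃ s, D a s = true := by
  have h : Partrec fun a => Nat.rfind fun s => Part.some (D a s) := Partrec.rfind hD.partrec₂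
  refine h.dom_re.of_eq fun a => ?_
  refine Nat.rfind_dom.trans ⟨?_, ?_⟩
  · rintro ⟨n, hn, -⟩
    exact ⟨n, (Part.mem_some_iff.1 hn).symm⟩
  · rintro ⟨n, hn⟩
    exact ⟨n, Part.mem_some_iff.2 hn.symm, fun _ => trivial⟩

theorem re_comp {p : β → Prop} (hp : REPred p) {f : α → β} (hf : Computable f) :
    REPred fun a => p (f a) := Partrec.comp hp hf

theorem re_and {p q : α → Prop} (hp : REPred p) (hq : REPred q) :
    REPred fun a => p a ∧ q a := by
  have h := Partrec.bind hp (Partrec.comp hq Computable.fst).to₂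
  refine h.dom_re.of_eq fun a => ?_
  simp [Part.dom_iff_mem]

theorem re_or {p q : α → Prop} (hp : REPred p) (hq : REPred q) :
    REPred fun a => p a ∨ q a := by
  obtain ⟨D, hD, hp, -⟩ := re_stage hp
  obtain ⟨E, hE, hq, -⟩ := re_stage hq
  have : Primrec₂ fun a s => D a s || E a s := Primrec.or.comp₂ hD hE
  refine (re_of_stage this.to_comp).of_eq fun a => ?_
  simp [hp, hq, exists_or]

theorem re_exists {p : α × β → Prop} (hp : REPred p) :
    REPred fun a => ∃ b, p (a, b) := by
  obtain ⟨D, hD, hp, -⟩ := re_stage hp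
  let E : α → ℕ → Bool := fun a s =>
    ((Encodable.decode (α := β) s.unpair.1).map fun b => D (a, b) s.unpair.2).getD false
  have hE : Primrec₂ E := by
    refine Primrec.option_getD.comp (Primrec.option_map
      (Primrec.decode.comp (Primrec.fst.comp (Primrec.unpair.comp Primrec.snd))) ?_)
      (Primrec.const false)
    exact hD.comp ((Primrec.fst.comp Primrec.fst).pair Primrec.snd)
      (Primrec.snd.comp (Primrec.unpair.comp (Primrec.snd.comp Primrec.fst)))
  refine (re_of_stage hE.to_comp).of_eq fun a => ?_
  constructor
  · rintro ⟨s, hs⟩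
    simp only [E] at hs
    cases hd : (Encodable.decode (α := β) s.unpair.1) with
    | none => simp [hd] at hs
    | some b => 
      refine ⟨b, (hp _).2 ⟨s.unpair.2, by simpa [hd] using hs⟩⟩
  · rintro ⟨b, hb⟩
    obtain ⟨t, ht⟩ := (hp _).1 hb
    exact ⟨Nat.pair (Encodable.encode b) t, by simp [E, ht]⟩

end RE

/-! ### Oracle codes -/

theorem toCodeO (c : Nat.Partrec.Code) : ∃ d : CodeO, ∀ O, d.eval O = c.eval := by
  induction c with
  | zero => exact ⟨.zero, fun O => rfl⟩
  | succ => exact ⟨.succ, fun O => rfl⟩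
  | left => exact ⟨.left, fun O => rfl⟩
  | right => exact ⟨.right, fun O => rfl⟩
  | pair f g hf hg =>
    obtain ⟨f', hf⟩ := hf; obtain ⟨g', hg⟩ := hg
    exact ⟨.pair f' g', fun O => by simp only [CodeO.eval, Nat.Partrec.Code.eval, hf, hg]; rfl⟩
  | comp f g hf hg =>
    obtain ⟨f', hf⟩ := hf; obtain ⟨g', hg⟩ := hg
    exact ⟨.comp f' g', fun O => by simp only [CodeO.eval, Nat.Partrec.Code.eval, hf, hg]; rfl⟩
  | prec f g hf hg =>
    obtain ⟨f', hf⟩ := hf; obtain ⟨g', hg⟩ := hg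
    exact ⟨.prec f' g', fun O => by simp only [CodeO.eval, Nat.Partrec.Code.eval, hf, hg]; rfl⟩
  | rfind' f hf =>
    obtain ⟨f', hf⟩ := hf
    exact ⟨.rfind' f', fun O => by simp only [CodeO.eval, Nat.Partrec.Code.eval, hf]; rfl⟩

theorem partrec_codeO {f : ℕ →. ℕ} (hf : Nat.Partrec f) : ∃ d : CodeO, ∀ O, d.eval O = f := by
  obtain ⟨c, rfl⟩ := Nat.Partrec.Code.exists_code.1 hf
  exact toCodeO c

theorem ceIn_of_re {S : ℕ → Prop} (hS : REPred S) (O : ℕ → ℕ) : CeIn O {m | S m} := by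
  have h : Partrec fun n : ℕ => (Part.assert (S n) fun _ => Part.some ()).map fun _ => (0:ℕ) :=
    Partrec.map hS (Computable.const 0).to₂
  obtain ⟨d, hd⟩ := partrec_codeO (Partrec.nat_iff.1 h)
  refine ⟨d, ?_⟩
  ext m
  rw [Set.mem_ofPred_eq, Set.mem_ofPred_eq, hd]
  simp [Part.dom_iff_mem]

theorem encode_inj : ∀ c d : CodeO, c.encode = d.encode → c = d := by
  intro c
  induction c with
  | zero => intro d h; cases d <;> simp [CodeO.encode] at h ⊢
  | succ => intro d h; cases d <;> simp [CodeO.encode] at h ⊢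
  | left => intro d h; cases d <;> simp [CodeO.encode] at h ⊢
  | right => intro d h; cases d <;> simp [CodeO.encode] at h ⊢
  | oracle => intro d h; cases d <;> simp [CodeO.encode] at h ⊢
  | pair f g hf hg =>
    intro d h
    cases d with
    | pair f' g' =>
      simp [CodeO.encode] at h
      rw [hf _ h.1, hg _ h.2]
    | _ => simp [CodeO.encode] at h <;> omega
  | comp f g hf hg =>
    intro d h
    cases d with
    | comp f' g' =>
      simp [CodeO.encode] at h
      rw [hf _ h.1, hg _ h.2]
    | _ => simp [CodeO.encode] at h <;> omega
  | prec f g hf hg =>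
    intro d h
    cases d with
    | prec f' g' =>
      simp [CodeO.encode] at h
      rw [hf _ h.1, hg _ h.2]
    | _ => simp [CodeO.encode] at h <;> omega
  | rfind' f hf =>
    intro d h
    cases d with
    | rfind' f' =>
      simp [CodeO.encode] at h
      rw [hf _ h]
    | _ => simp [CodeO.encode] at h <;> omega

theorem eval_comp (O : ℕ → ℕ) (f g : CodeO) (n : ℕ) :
    (CodeO.comp f g).eval O n = (g.eval O n).bind (f.eval O) := rfl

/-- Code for a constant function. -/
def constO : ℕ → CodeO
  | 0 => .zero
  | n + 1 => .comp .succ (constO n)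

theorem constO_eval (O : ℕ → ℕ) (n m : ℕ) : (constO n).eval O m = Part.some n := by
  induction n with
  | zero => rfl
  | succ n ih =>
    rw [constO, eval_comp, ih]
    exact Part.bind_some _ _

theorem constO_encode : Primrec fun n => (constO n).encode := by
  have : Primrec fun n : ℕ => (n.rec 0 (fun _ ih => 2 * (2 * Nat.pair 1 ih + 1) + 5) : ℕ) := by
    refine Primrec.nat_rec₁ 0 ?_
    refine Primrec.nat_add.comp (Primrec.nat_mul.comp (Primrec.const 2) (Primrec.nat_add.comp
      (Primrec.nat_mul.comp (Primrec.const 2) (Primrec₂.natPair.comp (Primrec.const 1) Primrec.snd))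
      (Primrec.const 1))) (Primrec.const 5)
  refine this.of_eq fun n => ?_
  induction n with
  | zero => rfl
  | succ n ih => simp only [constO, CodeO.encode] at ih ⊢; rw [ih]

theorem eval_comp_const (O : ℕ → ℕ) (c : CodeO) (x m : ℕ) :
    (CodeO.comp c (constO x)).eval O m = c.eval O x := by
  rw [eval_comp, constO_eval]
  exact Part.bind_some _ _

theorem jump_smn (O : ℕ → ℕ) (c : CodeO) (x : ℕ) :
    jump O (CodeO.comp c (constO x)).encode = if (c.eval O x).Dom then 1 else 0 := by
  unfold jump
  congr 1
  apply propext
  constructor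
  · rintro ⟨d, hd, h⟩
    rw [encode_inj _ _ hd] at h
    rwa [eval_comp_const] at h
  · intro h
    exact ⟨_, rfl, by rwa [eval_comp_const]⟩

theorem ceIn_jump {O : ℕ → ℕ} {S : Set ℕ} (hS : CeIn O S) :
    CeIn (jump O) {x | ∃ y, Nat.pair x y ∉ S} := by
  obtain ⟨c, rfl⟩ := hS
  have h1 : Primrec fun x => (CodeO.comp c (constO x)).encode := by
    simp only [CodeO.encode]
    refine Primrec.nat_add.comp (Primrec.nat_mul.comp (Primrec.const 2) (Primrec.nat_add.comp
      (Primrec.nat_mul.comp (Primrec.const 2) (Primrec₂.natPair.comp (Primrec.const _)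
        constO_encode)) (Primrec.const 1))) (Primrec.const 5)
  obtain ⟨d, hd⟩ := partrec_codeO (Partrec.nat_iff.1 h1.to_comp)
  have h2 : Primrec fun x : ℕ => Nat.pair x 0 :=
    Primrec₂.natPair.comp Primrec.id (Primrec.const 0)
  obtain ⟨e, he⟩ := partrec_codeO (Partrec.nat_iff.1 h2.to_comp)
  have h3 : ∀ z, (CodeO.comp .oracle d).eval (jump O) z
      = Part.some (if (c.eval O z).Dom then 1 else 0) := by
    intro z
    rw [eval_comp, hd, ← jump_smn]
    exact Part.bind_some _ _
  refine ⟨.comp (.rfind' (.comp .oracle d)) e, ?_⟩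
  ext x
  have h4 : (CodeO.comp (.rfind' (.comp .oracle d)) e).eval (jump O) x
      = (Nat.rfind fun n => (fun m => decide (m = 0)) <$>
          (CodeO.comp .oracle d).eval (jump O) (Nat.pair x (n + 0))).map (· + 0) := by
    rw [eval_comp, he]
    refine (Part.bind_some _ _).trans ?_
    simp only [CodeO.eval, Nat.unpaired, Nat.unpair_pair]
  rw [Set.mem_ofPred_eq, Set.mem_ofPred_eq, h4]
  simp only [h3]
  have h5 : ∀ P : ℕ →. Bool, ((Nat.rfind P).map (· + 0)).Dom ↔ (Nat.rfind P).Dom :=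
    fun P => Iff.rfl
  refine Iff.trans ?_ (Nat.rfind_dom.symm.trans (h5 _).symm)
  constructor
  · rintro ⟨y, hy⟩
    exact ⟨y, by simpa using hy, fun _ => trivial⟩
  · rintro ⟨y, hy, -⟩
    exact ⟨y, by simpa using hy⟩

theorem ceIn_sigma3 {Q : ℕ × ℕ × ℕ → Prop} (hQ : REPred Q) :
    CeIn (iterJump 2) {m | ∃ w, ∀ u, Q (m, w, u)} := by
  have h0 : REPred fun n : ℕ => Q (n.unpair.1.unpair.1, n.unpair.1.unpair.2, n.unpair.2) := by
    refine re_comp hQ (Primrec.to_comp ?_)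
    have h1 := Primrec.unpair
    exact (Primrec.fst.comp (h1.comp (Primrec.fst.comp h1))).pair
      ((Primrec.snd.comp (h1.comp (Primrec.fst.comp h1))).pair (Primrec.snd.comp h1))
  have := ceIn_jump (ceIn_jump (ceIn_of_re h0 (iterJump 0)))
  show CeIn (jump (jump (iterJump 0))) _
  convert this using 1
  ext m
  simp

end RandProb

namespace RandProb

/-- A real whose right cut is (essentially) `Σ₂`. -/
def S2 (β : ℝ) : Prop :=
  ∃ D : ℕ × ℕ × ℕ → ℕ → Bool, Computable₂ D ∧
    (∀ a d n : ℕ, 0 < d → (∀ j, D (a, d, n) j = false) → β ≤ (a : ℝ) / d) ∧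
    (∀ a d : ℕ, 0 < d → β < (a : ℝ) / d → ∃ n, ∀ j, D (a, d, n) j = false)

theorem primrec_two_pow : Primrec fun n : ℕ => 2 ^ n := by
  have : Primrec fun n : ℕ => (n.rec 1 (fun _ ih => 2 * ih) : ℕ) :=
    Primrec.nat_rec₁ 1 (Primrec.nat_mul.comp (Primrec.const 2) Primrec.snd)
  refine this.of_eq fun n => ?_
  induction n with
  | zero => rfl
  | succ n ih => simp only at ih ⊢; rw [ih, pow_succ']

/-- Parameters of the test. -/
structure Pm where
  i : ℕ
  k1 : ℕ
  d1 : ℕ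
  k2 : ℕ
  d2 : ℕ
  u : ℕ
  v : ℕ
  n : ℕ
  u' : ℕ
  v' : ℕ
  n' : ℕ

def pm (m w : ℕ) : Pm where
  i := m.unpair.1
  k1 := m.unpair.2.unpair.1.unpair.1
  d1 := m.unpair.2.unpair.1.unpair.2
  k2 := m.unpair.2.unpair.2.unpair.1
  d2 := m.unpair.2.unpair.2.unpair.2
  u := w.unpair.1
  v := w.unpair.2.unpair.1
  n := w.unpair.2.unpair.2.unpair.1
  u' := w.unpair.2.unpair.2.unpair.2.unpair.1
  v' := w.unpair.2.unpair.2.unpair.2.unpair.2.unpair.1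
  n' := w.unpair.2.unpair.2.unpair.2.unpair.2.unpair.2

def decPart (P : Pm) : Prop :=
  (0 < P.d1 ∧ 0 < P.d2 ∧ 0 < P.v ∧ 0 < P.v' ∧ P.k2 % 2 = 0) ∧
  ((P.k1 % 2 = 1 ∧
      (P.k2 / 2 * P.d1 + (P.k1 / 2 + 1) * P.d2) * 2 ^ (P.i + 1) ≤ P.d1 * P.d2) ∨
    (P.k1 % 2 = 0 ∧
      P.k2 / 2 * P.d1 * 2 ^ (P.i + 1) ≤ P.d1 * P.d2 + P.k1 / 2 * P.d2 * 2 ^ (P.i + 1)))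

def fullPart (Dβ Dγ : ℕ × ℕ × ℕ → ℕ → Bool) (P : Pm) (j : ℕ) : Prop :=
  decPart P ∧ (Dγ (P.u, P.v, P.n) j = false ∧
    Dβ (P.k2 / 2 * P.v' + P.u' * P.d2, P.d2 * P.v', P.n') j = false) ∧
  (P.k1 % 2 = 1 ∨ ∃ s, Dβ (P.k1 / 2 * P.v + P.u * P.d1, P.d1 * P.v, j) s = true) ∧
  (P.u' = 0 ∨ ∃ s, Dγ (P.u', P.v', j) s = true)

theorem re_fullPart_aux {α : Type*} [Primcodable α] {Dβ Dγ : ℕ × ℕ × ℕ → ℕ → Bool}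
    (hβ : Computable₂ Dβ) (hγ : Computable₂ Dγ) {i k1 d1 k2 d2 u v n u' v' n' j : α → ℕ}
    (hi : Primrec i) (hk1 : Primrec k1) (hd1 : Primrec d1) (hk2 : Primrec k2) (hd2 : Primrec d2)
    (hu : Primrec u) (hv : Primrec v) (hn : Primrec n) (hu' : Primrec u') (hv' : Primrec v')
    (hn' : Primrec n') (hj : Primrec j) :
    REPred fun t : α => fullPart Dβ Dγ ⟨i t, k1 t, d1 t, k2 t, d2 t, u t, v t, n t, u' t, v' t, n' t⟩
      (j t) := by
  have mul : ∀ {f g : α → ℕ}, Primrec f → Primrec g → Primrec fun t => f t * g t :=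
    fun h k => Primrec.nat_mul.comp h k
  have adp : ∀ {f g : α → ℕ}, Primrec f → Primrec g → Primrec fun t => f t + g t :=
    fun h k => Primrec.nat_add.comp h k
  have le : ∀ {f g : α → ℕ}, Primrec f → Primrec g → PrimrecPred fun t => f t ≤ g t :=
    fun h k => Primrec.nat_le.comp h k
  have lt : ∀ {f g : α → ℕ}, Primrec f → Primrec g → PrimrecPred fun t => f t < g t :=
    fun h k => Primrec.nat_lt.comp h k
  have eq : ∀ {f g : α → ℕ}, Primrec f → Primrec g → PrimrecPred fun t => f t = g t :=
    fun h k => Primrec.eq.comp h k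
  have md : ∀ {f : α → ℕ}, Primrec f → Primrec fun t => f t % 2 :=
    fun h => Primrec.nat_mod.comp h (Primrec.const 2)
  have dv : ∀ {f : α → ℕ}, Primrec f → Primrec fun t => f t / 2 :=
    fun h => Primrec.nat_div.comp h (Primrec.const 2)
  have cst : ∀ k : ℕ, Primrec fun t : α => k := fun k => Primrec.const k
  have pw : Primrec fun t : α => 2 ^ (i t + 1) :=
    primrec_two_pow.comp (adp hi (cst 1))
  have neg : ∀ {f : α → Bool}, Computable f → REPred fun t => f t = false := by
    intro f hf
    refine ComputablePred.to_re (ComputablePred.computable_iff.2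
      ⟨fun t => !(f t), Primrec.not.to_comp.comp hf, ?_⟩)
    funext t; simp
  have e1 : PrimrecPred fun t => (0 < d1 t ∧ 0 < d2 t ∧ 0 < v t ∧ 0 < v' t ∧ k2 t % 2 = 0) :=
    (lt (cst 0) hd1).and ((lt (cst 0) hd2).and ((lt (cst 0) hv).and
        ((lt (cst 0) hv').and (eq (md hk2) (cst 0)))))
  have e2 : PrimrecPred fun t => (k1 t % 2 = 1 ∧
      (k2 t / 2 * d1 t + (k1 t / 2 + 1) * d2 t) * 2 ^ (i t + 1) ≤ d1 t * d2 t) :=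
    (eq (md hk1) (cst 1)).and
      (le (mul (adp (mul (dv hk2) hd1) (mul (adp (dv hk1) (cst 1)) hd2)) pw) (mul hd1 hd2))
  have e3 : PrimrecPred fun t => (k1 t % 2 = 0 ∧
      k2 t / 2 * d1 t * 2 ^ (i t + 1) ≤ d1 t * d2 t + k1 t / 2 * d2 t * 2 ^ (i t + 1)) :=
    (eq (md hk1) (cst 0)).and
      (le (mul (mul (dv hk2) hd1) pw) (adp (mul hd1 hd2) (mul (mul (dv hk1) hd2) pw)))
  have f1 : REPred fun t => (Dγ (u t, v t, n t) (j t) = false ∧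
      Dβ (k2 t / 2 * v' t + u' t * d2 t, d2 t * v' t, n' t) (j t) = false) := by
    refine re_and (neg ?_) (neg ?_)
    · exact hγ.comp (hu.to_comp.pair (hv.to_comp.pair hn.to_comp)) hj.to_comp
    · exact hβ.comp ((adp (mul (dv hk2) hv') (mul hu' hd2)).to_comp.pair
        ((mul hd2 hv').to_comp.pair hn'.to_comp)) hj.to_comp
  have f2 : REPred fun t => ∃ s, Dβ (k1 t / 2 * v t + u t * d1 t, d1 t * v t, j t) s = true := by
    have h := ((adp (mul (dv hk1) hv) (mul hu hd1)).pair ((mul hd1 hv).pair hj)).to_comp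
    exact re_of_stage (hβ.comp (h.comp Computable.fst) Computable.snd)
  have f3 : REPred fun t => ∃ s, Dγ (u' t, v' t, j t) s = true := by
    have h := (hu'.pair (hv'.pair hj)).to_comp
    exact re_of_stage (hγ.comp (h.comp Computable.fst) Computable.snd)
  exact re_and (e1.and (e2.or e3)).computablePred.to_re
    (re_and f1 (re_and (re_or (eq (md hk1) (cst 1)).computablePred.to_re f2)
      (re_or (eq hu' (cst 0)).computablePred.to_re f3)))

theorem re_fullPart {Dβ Dγ : ℕ × ℕ × ℕ → ℕ → Bool} (hβ : Computable₂ Dβ) (hγ : Computable₂ Dγ) :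
    REPred fun t : ℕ × ℕ × ℕ => fullPart Dβ Dγ (pm t.1 t.2.1) t.2.2 := by
  have hm : Primrec fun t : ℕ × ℕ × ℕ => t.1 := Primrec.fst
  have hw : Primrec fun t : ℕ × ℕ × ℕ => t.2.1 := Primrec.fst.comp Primrec.snd
  have hj : Primrec fun t : ℕ × ℕ × ℕ => t.2.2 := Primrec.snd.comp Primrec.snd
  have l : ∀ {f : ℕ × ℕ × ℕ → ℕ}, Primrec f → Primrec fun t => (f t).unpair.1 :=
    fun h => Primrec.fst.comp (Primrec.unpair.comp h)
  have r : ∀ {f : ℕ × ℕ × ℕ → ℕ}, Primrec f → Primrec fun t => (f t).unpair.2 :=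
    fun h => Primrec.snd.comp (Primrec.unpair.comp h)
  exact re_fullPart_aux hβ hγ (l hm) (l (l (r hm))) (r (l (r hm))) (l (r (r hm))) (r (r (r hm)))
    (l hw) (l (r hw)) (l (r (r hw))) (l (r (r (r hw)))) (l (r (r (r (r hw)))))
    (r (r (r (r (r hw))))) hj

theorem frac_between {x y : ℝ} (hx : 0 ≤ x) (h : x < y) :
    ∃ a d : ℕ, 0 < d ∧ x < (a : ℝ) / d ∧ (a : ℝ) / d < y := by
  obtain ⟨q, h1, h2⟩ := exists_rat_btwn h
  have hq : 0 < q := by exact_mod_cast hx.trans_lt h1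
  refine ⟨q.num.toNat, q.den, q.pos, ?_⟩
  have : ((q.num.toNat : ℕ) : ℝ) / q.den = q := by
    have h0 : ((q.num.toNat : ℕ) : ℤ) = q.num := Int.toNat_of_nonneg (Rat.num_pos.2 hq).le
    have h3 : ((q.num.toNat : ℕ) : ℝ) = (q.num : ℝ) := by exact_mod_cast congrArg (Int.cast (R := ℝ)) h0
    rw [h3]
    exact (Rat.cast_def q).symm
  rw [this]; exact ⟨h1, h2⟩

end RandProb

namespace RandProb

theorem rat_code (p : ℚ) :
    (Encodable.encode p.num % 2 = 1 ∧
      (p : ℝ) = -(((Encodable.encode p.num / 2 : ℕ) : ℝ) + 1) / p.den) ∨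
    (Encodable.encode p.num % 2 = 0 ∧
      (p : ℝ) = ((Encodable.encode p.num / 2 : ℕ) : ℝ) / p.den) := by
  have h := Rat.cast_def (K := ℝ) p
  rcases hn : p.num with n | n
  · right
    have : Encodable.encode (Int.ofNat n) = 2 * n := rfl
    rw [this]
    refine ⟨by omega, ?_⟩
    rw [h, hn, show 2 * n / 2 = n by omega]
    simp
  · left
    have : Encodable.encode (Int.negSucc n) = 2 * n + 1 := rfl
    rw [this]
    refine ⟨by omega, ?_⟩
    rw [h, hn, show (2 * n + 1) / 2 = n by omega]
    simp [Int.negSucc_eq]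

theorem pm_code (i : ℕ) (p q : ℚ) (u v n u' v' n' : ℕ) :
    pm (Nat.pair i (Encodable.encode (p, q)))
      (Nat.pair u (Nat.pair v (Nat.pair n (Nat.pair u' (Nat.pair v' n'))))) =
    ⟨i, Encodable.encode p.num, p.den, Encodable.encode q.num, q.den, u, v, n, u', v', n'⟩ := by
  have h : ∀ p : ℚ, Encodable.encode p = Nat.pair (Encodable.encode p.num) p.den := fun p => rfl
  simp [pm, h]

theorem not_random {β γ : ℝ} (hβ : S2 β) (hγ : S2 γ) (h0 : 0 ≤ γ) (h1 : γ ≤ β) :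
    ¬ NRandom 3 (β - γ) := by
  obtain ⟨Dβ, cβ, β1, β2⟩ := hβ
  obtain ⟨Dγ, cγ, γ1, γ2⟩ := hγ
  intro hr
  have hmeas : ∀ i, volume (testSet {m | ∃ w, ∀ j, fullPart Dβ Dγ (pm m w) j} i) ≤
      ENNReal.ofReal ((2 : ℝ)⁻¹ ^ i) := by
    intro i
    set h : ℝ := (2 : ℝ)⁻¹ ^ (i + 1) with hh
    have hsub : testSet {m | ∃ w, ∀ j, fullPart Dβ Dγ (pm m w) j} i ⊆
        Set.Icc (β - γ - h) (β - γ + h) := by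
      rintro x ⟨p, q, ⟨w, hw⟩, hpx, hxq⟩
      obtain ⟨u, w, rfl⟩ : ∃ a b, w = Nat.pair a b := ⟨_, _, (Nat.pair_unpair w).symm⟩
      obtain ⟨v, w, rfl⟩ : ∃ a b, w = Nat.pair a b := ⟨_, _, (Nat.pair_unpair w).symm⟩
      obtain ⟨n, w, rfl⟩ : ∃ a b, w = Nat.pair a b := ⟨_, _, (Nat.pair_unpair w).symm⟩
      obtain ⟨u', w, rfl⟩ : ∃ a b, w = Nat.pair a b := ⟨_, _, (Nat.pair_unpair w).symm⟩
      obtain ⟨v', n', rfl⟩ : ∃ a b, w = Nat.pair a b := ⟨_, _, (Nat.pair_unpair w).symm⟩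
      simp only [pm_code] at hw
      obtain ⟨⟨⟨_, _, hv, hv', hq2⟩, hlen⟩, -, -, -⟩ := hw 0
      simp only at hv hv' hq2 hlen
      have hd1 : (0 : ℝ) < p.den := by exact_mod_cast p.pos
      have hd2 : (0 : ℝ) < q.den := by exact_mod_cast q.pos
      have hvR : (0 : ℝ) < v := by exact_mod_cast hv
      have hvR' : (0 : ℝ) < v' := by exact_mod_cast hv'
      have a1 : γ ≤ (u : ℝ) / v := γ1 u v n hv fun j => (hw j).2.1.1
      have a2 := β1 _ _ n' (Nat.mul_pos q.pos hv') fun j => (hw j).2.1.2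
      have hq : (q : ℝ) = ((Encodable.encode q.num / 2 : ℕ) : ℝ) / q.den := by
        rcases rat_code q with ⟨h3, _⟩ | ⟨_, h3⟩
        · omega
        · exact h3
      rw [Nat.cast_add, Nat.cast_mul, Nat.cast_mul, Nat.cast_mul, add_div,
          mul_div_mul_right _ _ hvR'.ne', mul_comm (u' : ℝ), mul_div_mul_left _ _ hd2.ne', ← hq] at a2
      have a3 : (u' : ℝ) / v' ≤ γ := by
        by_contra hc
        push Not at hc
        obtain ⟨m, hm⟩ := γ2 u' v' hv' hc
        rcases (hw m).2.2.2 with h3 | ⟨s, h3⟩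
        · simp only at h3
          rw [h3] at hc
          simp at hc
          linarith
        · rw [hm s] at h3
          exact Bool.noConfusion h3
      have a4 : (p : ℝ) + (u : ℝ) / v ≤ β ∨ (p : ℝ) < 0 := by
        rcases rat_code p with ⟨h3, h4⟩ | ⟨h3, h4⟩
        · right
          rw [h4]
          apply div_neg_of_neg_of_pos _ hd1
          have : (0 : ℝ) ≤ ((Encodable.encode p.num / 2 : ℕ) : ℝ) := Nat.cast_nonneg _
          linarith
        · left
          by_contra hc
          push Not at hc
          obtain ⟨m, hm⟩ := β2 (Encodable.encode p.num / 2 * v + u * p.den) (p.den * v)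
            (Nat.mul_pos p.pos hv) (by
              rw [Nat.cast_add, Nat.cast_mul, Nat.cast_mul, Nat.cast_mul, add_div,
                mul_div_mul_right _ _ hvR.ne', mul_comm (u : ℝ), mul_div_mul_left _ _ hd1.ne', ← h4]
              exact hc)
          rcases (hw m).2.2.1 with h5 | ⟨s, h5⟩
          · simp only at h5
            omega
          · simp only at h5
            rw [hm s] at h5
            exact Bool.noConfusion h5
      have hpow : h * 2 ^ (i + 1) = 1 := by
        rw [hh, ← mul_pow]; norm_num
      have key : ∀ P : ℝ, (p : ℝ) = P / p.den →
          ((Encodable.encode q.num / 2 : ℕ) : ℝ) * p.den * 2 ^ (i + 1) ≤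
            p.den * q.den + P * q.den * 2 ^ (i + 1) → (q : ℝ) - p ≤ h := by
        intro P hP hle
        rw [hP, hq, div_sub_div _ _ hd2.ne' hd1.ne', div_le_iff₀ (by positivity)]
        have h2 : (0 : ℝ) < 2 ^ (i + 1) := by positivity
        refine le_of_mul_le_mul_right ?_ h2
        have e : h * ((q.den : ℝ) * p.den) * 2 ^ (i + 1) = q.den * p.den := by
          rw [mul_right_comm, hpow, one_mul]
        rw [e]
        linarith
      have hlen' : (q : ℝ) - p ≤ h := by
        rcases rat_code p with ⟨h3, h4⟩ | ⟨h3, h4⟩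
        · refine key _ h4 ?_
          rcases hlen with ⟨_, h5⟩ | ⟨h5, _⟩
          · have h6 := (Nat.cast_le (α := ℝ)).2 h5
            rw [Nat.cast_mul, Nat.cast_add, Nat.cast_mul, Nat.cast_mul, Nat.cast_mul, Nat.cast_pow,
              Nat.cast_add, Nat.cast_one, Nat.cast_ofNat] at h6
            linarith
          · omega
        · refine key _ h4 ?_
          rcases hlen with ⟨h5, _⟩ | ⟨_, h5⟩
          · omega
          · have h6 := (Nat.cast_le (α := ℝ)).2 h5
            rw [Nat.cast_mul, Nat.cast_mul, Nat.cast_add, Nat.cast_mul, Nat.cast_mul, Nat.cast_mul,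
              Nat.cast_pow, Nat.cast_ofNat] at h6
            linarith
      have a5 : (p : ℝ) ≤ β - γ := by
        rcases a4 with h3 | h3 <;> linarith
      constructor <;> linarith
    refine (measure_mono hsub).trans ?_
    rw [Real.volume_Icc]
    apply ENNReal.ofReal_le_ofReal
    rw [hh, pow_succ]
    linarith
  obtain ⟨i, hi⟩ := hr _ (ceIn_sigma3 (re_fullPart cβ cγ)) hmeas
  · -- membership
    apply hi
    set h : ℝ := (2 : ℝ)⁻¹ ^ (i + 1) with hh
    have hpos : 0 < h := by positivity
    obtain ⟨p, hp1, hp2⟩ := exists_rat_btwn (show β - γ - h / 2 < β - γ by linarith)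
    obtain ⟨q, hq1, hq2⟩ := exists_rat_btwn (show β - γ < β - γ + h / 2 by linarith)
    have hlen : (q : ℝ) - p ≤ h := by linarith
    have hq0 : (0 : ℝ) < q := by linarith
    -- r
    obtain ⟨u, v, hv, hu1, hu2⟩ : ∃ u v : ℕ, 0 < v ∧ γ < (u : ℝ) / v ∧ (u : ℝ) / v < β - p :=
      frac_between h0 (by linarith)
    obtain ⟨u', v', hv', hu1', hu2'⟩ : ∃ u v : ℕ, 0 < v ∧ (u = 0 ∨ (u : ℝ) / v < γ) ∧
        β < q + (u : ℝ) / v := by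
      by_cases hb : β < q
      · exact ⟨0, 1, one_pos, Or.inl rfl, by simpa using hb⟩
      · obtain ⟨u, v, hv, h3, h4⟩ := frac_between (x := β - q) (y := γ) (by linarith) (by linarith)
        exact ⟨u, v, hv, Or.inr h4, by linarith⟩
    obtain ⟨n, hn⟩ := γ2 u v hv hu1
    have hd1 : (0 : ℝ) < p.den := by exact_mod_cast p.pos
    have hd2 : (0 : ℝ) < q.den := by exact_mod_cast q.pos
    have hvR : (0 : ℝ) < v := by exact_mod_cast hv
    have hvR' : (0 : ℝ) < v' := by exact_mod_cast hv'
    have hqc : Encodable.encode q.num % 2 = 0 ∧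
        (q : ℝ) = ((Encodable.encode q.num / 2 : ℕ) : ℝ) / q.den := by
      rcases rat_code q with ⟨_, h3⟩ | h3
      · exfalso
        have : (q : ℝ) ≤ 0 := by
          rw [h3]
          apply div_nonpos_of_nonpos_of_nonneg
          · have : (0 : ℝ) ≤ ((Encodable.encode q.num / 2 : ℕ) : ℝ) := Nat.cast_nonneg _
            linarith
          · exact hd2.le
        linarith
      · exact h3
    have hpow : h * 2 ^ (i + 1) = 1 := by
      rw [hh, ← mul_pow]; norm_num
    obtain ⟨n', hn'⟩ := β2 (Encodable.encode q.num / 2 * v' + u' * q.den) (q.den * v')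
      (Nat.mul_pos q.pos hv') (by
        rw [Nat.cast_add, Nat.cast_mul, Nat.cast_mul, Nat.cast_mul, add_div,
          mul_div_mul_right _ _ hvR'.ne', mul_comm (u' : ℝ), mul_div_mul_left _ _ hd2.ne',
          ← hqc.2]
        exact hu2')
    refine ⟨p, q, ⟨Nat.pair u (Nat.pair v (Nat.pair n (Nat.pair u' (Nat.pair v' n')))), ?_⟩,
      hp2, hq1⟩
    intro j
    simp only [pm_code]
    refine ⟨⟨⟨p.pos, q.pos, hv, hv', hqc.1⟩, ?_⟩, ⟨hn j, hn' j⟩, ?_, ?_⟩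
    · have key : ∀ P : ℝ, (p : ℝ) = P / p.den →
          ((Encodable.encode q.num / 2 : ℕ) : ℝ) * p.den * 2 ^ (i + 1) ≤
            p.den * q.den + P * q.den * 2 ^ (i + 1) := by
        intro P hP
        rw [hP, hqc.2, div_sub_div _ _ hd2.ne' hd1.ne', div_le_iff₀ (by positivity)] at hlen
        have h2 : (0 : ℝ) ≤ 2 ^ (i + 1) := by positivity
        have := mul_le_mul_of_nonneg_right hlen h2
        have e : h * ((q.den : ℝ) * p.den) * 2 ^ (i + 1) = q.den * p.den := by
          rw [mul_right_comm, hpow, one_mul]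
        rw [e] at this
        linarith
      rcases rat_code p with ⟨h3, h4⟩ | ⟨h3, h4⟩
      · left
        refine ⟨h3, ?_⟩
        have := key _ h4
        have h5 : ((((Encodable.encode q.num / 2 : ℕ) * p.den +
          ((Encodable.encode p.num / 2 : ℕ) + 1) * q.den) * 2 ^ (i + 1) : ℕ) : ℝ) ≤
          ((p.den * q.den : ℕ) : ℝ) := by
          rw [Nat.cast_mul, Nat.cast_add, Nat.cast_mul, Nat.cast_mul, Nat.cast_mul, Nat.cast_pow,
            Nat.cast_add, Nat.cast_one, Nat.cast_ofNat]
          linarith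
        exact_mod_cast h5
      · right
        refine ⟨h3, ?_⟩
        have := key _ h4
        have h5 : (((Encodable.encode q.num / 2 : ℕ) * p.den * 2 ^ (i + 1) : ℕ) : ℝ) ≤
          ((p.den * q.den + (Encodable.encode p.num / 2 : ℕ) * q.den * 2 ^ (i + 1) : ℕ) : ℝ) := by
          rw [Nat.cast_mul, Nat.cast_mul, Nat.cast_add, Nat.cast_mul, Nat.cast_mul, Nat.cast_mul,
            Nat.cast_pow, Nat.cast_ofNat]
          linarith
        exact_mod_cast h5
    · rcases rat_code p with ⟨h3, h4⟩ | ⟨h3, h4⟩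
      · exact Or.inl h3
      · right
        by_contra hc
        push Not at hc
        have := β1 _ _ _ (Nat.mul_pos p.pos hv) (fun s => by simpa using hc s)
        rw [Nat.cast_add, Nat.cast_mul, Nat.cast_mul, Nat.cast_mul, add_div,
          mul_div_mul_right _ _ hvR.ne', mul_comm (u : ℝ), mul_div_mul_left _ _ hd1.ne', ← h4] at this
        linarith
    · rcases hu1' with h3 | h3
      · exact Or.inl h3
      · right
        by_contra hc
        push Not at hc
        have := γ1 _ _ _ hv' (fun s => by simpa using hc s)
        linarith

end RandProb

namespace RandProb

/-! ### The uniform measure -/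

theorem measurable_digits : Measurable digits := by
  refine measurable_pi_lambda _ fun n => ?_
  have h : Measurable fun x : ℝ => ⌊x * 2 ^ (n + 1)⌋ :=
    Int.measurable_floor.comp (measurable_id.mul_const _)
  exact (measurable_of_countable (fun z : ℤ => decide (z % 2 = 1))).comp h

instance mu_prob : IsProbabilityMeasure mu := by
  have : IsProbabilityMeasure (volume.restrict (Set.Ico (0 : ℝ) 1)) := ⟨by simp⟩
  exact Measure.isProbabilityMeasure_map measurable_digits.aemeasurable

theorem initSeg_succ (X : Cantor) (n : ℕ) : initSeg X (n + 1) = initSeg X n ++ [X n] := by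
  simp [initSeg, List.range_succ]

@[simp] theorem initSeg_length (X : Cantor) (n : ℕ) : (initSeg X n).length = n := by
  simp [initSeg]

theorem initSeg_prefix (X : Cantor) {m n : ℕ} (h : m ≤ n) : initSeg X m <+: initSeg X n := by
  induction n, h using Nat.le_induction with
  | base => exact List.prefix_rfl
  | succ n _ ih => rw [initSeg_succ]; exact ih.trans (List.prefix_append _ _)

theorem prefix_initSeg {X : Cantor} {n : ℕ} {σ : List Bool} (h : σ <+: initSeg X n) :
    σ = initSeg X σ.length := by
  have h1 : σ.length ≤ n := by simpa using h.length_le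
  exact List.prefix_of_prefix_length_le h (initSeg_prefix X h1) (by simp) |>.eq_of_length (by simp)

def val (σ : List Bool) : ℤ := σ.foldl (fun a b => 2 * a + cond b 1 0) 0

theorem val_append (σ : List Bool) (b : Bool) : val (σ ++ [b]) = 2 * val σ + cond b 1 0 := by
  simp [val]

theorem val_bound (σ : List Bool) : 0 ≤ val σ ∧ val σ < 2 ^ σ.length := by
  induction σ using List.reverseRecOn with
  | nil => simp [val]
  | append_singleton σ b ih =>
    rw [val_append, List.length_append, List.length_singleton, pow_succ]
    cases b <;> simp <;> omega

theorem val_inj : ∀ (n : ℕ) (σ τ : List Bool), σ.length = n → τ.length = n → val σ = val τ → σ = τ := by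
  intro n
  induction n with
  | zero =>
    intro σ τ h1 h2 _
    rw [List.length_eq_zero_iff.1 h1, List.length_eq_zero_iff.1 h2]
  | succ n ih =>
    intro σ τ h1 h2 h
    rcases List.eq_nil_or_concat σ with rfl | ⟨σ', b, rfl⟩
    · simp at h1
    rcases List.eq_nil_or_concat τ with rfl | ⟨τ', c, rfl⟩
    · simp at h2
    simp only [List.concat_eq_append] at *
    rw [val_append, val_append] at h
    have hb : b = c := by
      cases b <;> cases c <;> simp at h ⊢ <;> omega
    subst hb
    rw [ih σ' τ' (by simpa using h1) (by simpa using h2) (by omega)]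

theorem val_initSeg (x : ℝ) (hx : x ∈ Set.Ico (0 : ℝ) 1) (n : ℕ) :
    val (initSeg (digits x) n) = ⌊x * 2 ^ n⌋ := by
  induction n with
  | zero =>
    have : ⌊x⌋ = 0 := Int.floor_eq_zero_iff.2 hx
    simp [initSeg, val, this]
  | succ n ih =>
    rw [initSeg_succ, val_append, ih]
    have h : ⌊x * 2 ^ n⌋ = ⌊x * 2 ^ (n + 1)⌋ / 2 := by
      have e : x * 2 ^ n = (x * 2 ^ (n + 1)) / ((2 : ℕ) : ℝ) := by
        rw [pow_succ]; push_cast; ring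
      rw [e, Int.floor_div_natCast]; rfl
    rw [h]
    unfold digits
    by_cases h2 : ⌊x * 2 ^ (n + 1)⌋ % 2 = 1
    · rw [decide_eq_true h2]; simp only [cond_true]; omega
    · rw [decide_eq_false h2]; simp only [cond_false]; omega

theorem measurableSet_initSeg (s : ℕ) (P : List Bool → Prop) :
    MeasurableSet {X : Cantor | P (initSeg X s)} := by
  have h : Measurable fun X : Cantor => (fun i : Fin s => X i) :=
    measurable_pi_lambda _ fun i => measurable_pi_apply _
  have h2 : {X : Cantor | P (initSeg X s)} =
      (fun X : Cantor => (fun i : Fin s => X i)) ⁻¹' {f | P (List.ofFn f)} := by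
    ext X
    have : initSeg X s = List.ofFn (fun i : Fin s => X i) := by
      apply List.ext_getElem <;> simp [initSeg]
    simp [this]
  rw [h2]
  exact h (Set.toFinite _).measurableSet

theorem mu_cyl (σ : List Bool) :
    mu {X | initSeg X σ.length = σ} = ENNReal.ofReal ((2 : ℝ)⁻¹ ^ σ.length) := by
  rw [mu, Measure.map_apply measurable_digits (measurableSet_initSeg _ (fun t => t = σ)),
    Measure.restrict_apply (measurable_digits (measurableSet_initSeg _ (fun t => t = σ)))]
  have hp : (0 : ℝ) < 2 ^ σ.length := by positivity
  have e : digits ⁻¹' {X | initSeg X σ.length = σ} ∩ Set.Ico 0 1 =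
      Set.Ico ((val σ : ℝ) / 2 ^ σ.length) ((val σ + 1 : ℝ) / 2 ^ σ.length) := by
    ext x
    have hb := val_bound σ
    have key : x ∈ Set.Ico ((val σ : ℝ) / 2 ^ σ.length) ((val σ + 1 : ℝ) / 2 ^ σ.length) ↔
        ⌊x * 2 ^ σ.length⌋ = val σ := by
      rw [Int.floor_eq_iff, Set.mem_Ico, div_le_iff₀ hp, lt_div_iff₀ hp]
    rw [key]
    constructor
    · rintro ⟨h1, h2⟩
      rw [← val_initSeg x h2]
      exact congrArg val h1
    · intro h
      have hx : x ∈ Set.Ico (0 : ℝ) 1 := by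
        rw [← key] at h
        have h1 : (0 : ℝ) ≤ val σ := by exact_mod_cast hb.1
        have h2 : (val σ + 1 : ℝ) ≤ 2 ^ σ.length := by exact_mod_cast hb.2
        refine ⟨le_trans (by positivity) h.1, lt_of_lt_of_le h.2 ?_⟩
        rw [div_le_one hp]; exact h2
      refine ⟨val_inj σ.length _ _ (by simp) rfl ?_, hx⟩
      rw [val_initSeg x hx, h]
  rw [e, Real.volume_Ico]
  congr 1
  rw [← sub_div, inv_pow]; simp

/-- All strings of length `n`. -/
def strs : ℕ → List (List Bool)
  | 0 => [[]]
  | n + 1 => (strs n).map (false :: ·) ++ (strs n).map (true :: ·)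

theorem mem_strs {n : ℕ} {τ : List Bool} : τ ∈ strs n ↔ τ.length = n := by
  induction n generalizing τ with
  | zero => simp [strs]
  | succ n ih =>
    cases τ with
    | nil => simp [strs]
    | cons b τ => cases b <;> simp [strs, ih]

theorem strs_nodup (n : ℕ) : (strs n).Nodup := by
  induction n with
  | zero => simp [strs]
  | succ n ih =>
    refine List.Nodup.append (ih.map ?_) (ih.map ?_) ?_
    · intro a b h; simpa using h
    · intro a b h; simpa using h
    · intro a h1 h2
      simp only [List.mem_map] at h1 h2
      obtain ⟨x, _, rfl⟩ := h1
      obtain ⟨y, _, h⟩ := h2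
      simp at h

theorem mu_count (s : ℕ) (P : List Bool → Bool) :
    mu.real {X | P (initSeg X s) = true} = (((strs s).filter P).length : ℝ) / 2 ^ s := by
  have hS : {X : Cantor | P (initSeg X s) = true} =
      ⋃ σ ∈ ((strs s).filter P).toFinset, {X | initSeg X s = σ} := by
    ext X
    simp [mem_strs]
  rw [hS, measureReal_biUnion_finset]
  · have : ∀ σ ∈ ((strs s).filter P).toFinset, mu.real {X | initSeg X s = σ} = (2 : ℝ)⁻¹ ^ s := by
      intro σ hσ
      simp only [List.mem_toFinset, List.mem_filter, mem_strs] at hσ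
      have := mu_cyl σ
      rw [hσ.1] at this
      rw [measureReal_def, this, ENNReal.toReal_ofReal (by positivity)]
    rw [Finset.sum_congr rfl this, Finset.sum_const,
      List.toFinset_card_of_nodup ((strs_nodup s).filter _)]
    simp [div_eq_mul_inv]
  · intro a _ b _ hab
    refine Set.disjoint_left.2 fun X h1 h2 => hab ?_
    exact h1.symm.trans h2
  · intro σ _
    exact measurableSet_initSeg s (fun t => t = σ)

theorem primrec_strs : Primrec strs := by
  have h : Primrec fun l : List (List Bool) => l.map (false :: ·) ++ l.map (true :: ·) := by
    refine Primrec.list_append.comp ?_ ?_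
    · exact Primrec.list_map Primrec.id (Primrec.list_cons.comp (Primrec.const _) Primrec.snd).to₂
    · exact Primrec.list_map Primrec.id (Primrec.list_cons.comp (Primrec.const _) Primrec.snd).to₂
  refine (Primrec.nat_rec' (f := fun n : ℕ => n) (g := fun _ => [[]])
    (h := fun _ p => p.2.map (false :: ·) ++ p.2.map (true :: ·)) Primrec.id (Primrec.const _)
    (h.comp (Primrec.snd.comp Primrec.snd)).to₂).of_eq fun n => ?_
  induction n with
  | zero => rfl
  | succ n ih => simp only [strs, ← ih]

end RandProb

namespace RandProb

open Filter Topology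

/-- The class of oracles on which the output extends `τ`. -/
def V (A : List Bool → List Bool → Prop) (τ : List Bool) : Set Cantor :=
  {X | ∃ n, A τ (initSeg X n)}

theorem approx {A : List Bool → List Bool → Prop}
    (hA : REPred fun p : List Bool × List Bool => A p.1 p.2) :
    ∃ cnt : List Bool → ℕ → ℕ, Primrec₂ cnt ∧
      (∀ τ, Monotone fun s => (cnt τ s : ℝ) / 2 ^ s) ∧
      ∀ τ, Tendsto (fun s => (cnt τ s : ℝ) / 2 ^ s) atTop (𝓝 (mu.real (V A τ))) := by
  obtain ⟨D, hD, h1, h2⟩ := re_stage hA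
  let R : ℕ → List Bool × List Bool → Prop :=
    fun i p => D (p.1, p.2.take i) p.2.length = true
  have hR : PrimrecRel R := by
    refine Primrec.eq.comp (hD.comp ?_ ?_) (Primrec.const true)
    · exact (Primrec.fst.comp Primrec.snd).pair
        (Primrec.list_take.comp Primrec.fst (Primrec.snd.comp Primrec.snd))
    · exact Primrec.list_length.comp (Primrec.snd.comp Primrec.snd)
  let D' : List Bool → List Bool → Prop := fun σ τ => ∃ i < σ.length + 1, R i (τ, σ)
  have hD' : PrimrecRel D' := by
    have h3 := hR.exists_mem_list
    have f1 : Primrec fun q : List Bool × List Bool => List.range (q.1.length + 1) :=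
      Primrec.list_range.comp (Primrec.succ.comp (Primrec.list_length.comp Primrec.fst))
    have f2 : Primrec fun q : List Bool × List Bool => (q.2, q.1) :=
      Primrec.snd.pair Primrec.fst
    exact (h3.comp f1 f2).of_eq fun q => by simp only [D', List.mem_range]
  let cnt : List Bool → ℕ → ℕ := fun τ s => ((strs s).filter fun σ => decide (D' σ τ)).length
  have hcnt : Primrec₂ cnt := by
    have := hD'.listFilter
    refine (Primrec.list_length.comp (this.comp (primrec_strs.comp Primrec.snd) Primrec.fst)).of_eq ?_
    intro p
    simp only [cnt]
  have hset : ∀ τ s, mu.real {X | D' (initSeg X s) τ} = (cnt τ s : ℝ) / 2 ^ s := by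
    intro τ s
    have := mu_count s (fun σ => decide (D' σ τ))
    simpa [cnt] using this
  have hmono : ∀ τ, Monotone fun s => {X | D' (initSeg X s) τ} := by
    intro τ s t hst X hX
    obtain ⟨i, hi, hh⟩ := hX
    simp only [R, initSeg_length] at hi hh
    refine ⟨i, by simp; omega, ?_⟩
    simp only [R, initSeg_length]
    have e : (initSeg X t).take i = (initSeg X s).take i := by
      obtain ⟨u, hu⟩ := initSeg_prefix X hst
      rw [← hu, List.take_append_of_le_length (by simp; omega)]
    rw [e]
    exact h2 _ _ _ hst hh
  refine ⟨cnt, hcnt, ?_, ?_⟩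
  · intro τ s t hst
    simp only [← hset]
    exact measureReal_mono (hmono τ hst)
  · intro τ
    simp only [← hset]
    have hU : V A τ = ⋃ s, {X | D' (initSeg X s) τ} := by
      ext X
      simp only [V, Set.mem_ofPred_eq, Set.mem_iUnion]
      constructor
      · rintro ⟨n, hn⟩
        obtain ⟨s, hs⟩ := (h1 (τ, initSeg X n)).1 hn
        refine ⟨max n s, n, by simp, ?_⟩
        simp only [R, initSeg_length]
        have e : (initSeg X (max n s)).take n = initSeg X n := by
          obtain ⟨u, hu⟩ := initSeg_prefix X (le_max_left n s)
          rw [← hu]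
          conv_lhs => rw [← initSeg_length X n]
          rw [initSeg_length X n, List.take_left' (by simp)]
        rw [e]
        exact h2 _ _ _ (le_max_right _ _) hs
      · rintro ⟨s, i, hi, hh⟩
        refine ⟨i, (h1 (τ, initSeg X i)).2 ⟨s, ?_⟩⟩
        simp only [R, initSeg_length] at hi hh
        have e : (initSeg X s).take i = initSeg X i := by
          obtain ⟨u, hu⟩ := initSeg_prefix X (show i ≤ s by omega)
          rw [← hu, List.take_left' (by simp)]
        rwa [e] at hh
    rw [hU]
    have := tendsto_measure_iUnion_atTop (μ := mu) (hmono τ)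
    exact (ENNReal.tendsto_toReal (measure_ne_top _ _)).comp this

/-- Truncated sums. -/
noncomputable def G (A : List Bool → List Bool → Prop) (K m : ℕ) : ℝ :=
  ∑ τ ∈ (strs m).toFinset, min (mu.real (V A τ)) (1 / (K : ℝ))

theorem primrec_sum {α β : Type*} [Primcodable α] [Primcodable β] {f : α → List β}
    {g : α → β → ℕ} (hf : Primrec f) (hg : Primrec₂ g) :
    Primrec fun a => ((f a).map (g a)).sum := by
  have h : Primrec fun l : List ℕ => l.sum := by
    have := Primrec.list_foldr (f := fun l : List ℕ => l) (g := fun _ => 0)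
      (h := fun _ p => p.1 + p.2) Primrec.id (Primrec.const 0)
      (Primrec.nat_add.comp (Primrec.fst.comp Primrec.snd) (Primrec.snd.comp Primrec.snd)).to₂
    exact this.of_eq fun l => by rw [List.sum]
  exact h.comp (Primrec.list_map hf hg)

theorem S2_of {A : List Bool → List Bool → Prop}
    (hA : REPred fun p : List Bool × List Bool => A p.1 p.2)
    {κ : ℕ → ℕ} (hκ : Primrec κ) (hκ0 : ∀ n, 0 < κ n) (β : ℝ)
    (b1 : ∀ k n0 x, (∀ m, n0 ≤ m → G A (κ k) m ≤ x) → β ≤ x)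
    (b2 : ∀ x, β < x → ∃ k n0, ∀ m, n0 ≤ m → G A (κ k) m ≤ x) : S2 β := by
  obtain ⟨cnt, hcnt, hmono, hlim⟩ := approx hA
  let g : ℕ → ℕ → ℕ → ℕ := fun K m s =>
    ((strs m).map fun τ => min (K * cnt τ s) (2 ^ s)).sum
  have hg : Primrec fun p : ℕ × ℕ × ℕ => g p.1 p.2.1 p.2.2 := by
    refine primrec_sum (primrec_strs.comp (Primrec.fst.comp Primrec.snd)) ?_
    have e1 : Primrec fun q : (ℕ × ℕ × ℕ) × List Bool => q.1.2.2 :=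
      Primrec.snd.comp (Primrec.snd.comp Primrec.fst)
    have e2 : Primrec fun q : (ℕ × ℕ × ℕ) × List Bool => q.1.1 :=
      Primrec.fst.comp Primrec.fst
    exact (Primrec.nat_min.comp (Primrec.nat_mul.comp e2 (hcnt.comp Primrec.snd e1))
      (primrec_two_pow.comp e1)).to₂
  have hgr : ∀ K m s, 0 < K → (g K m s : ℝ) / (K * 2 ^ s) =
      ∑ τ ∈ (strs m).toFinset, min ((cnt τ s : ℝ) / 2 ^ s) (1 / (K : ℝ)) := by
    intro K m s hK
    have hK' : (0 : ℝ) < K := by exact_mod_cast hK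
    have h2 : (0 : ℝ) < 2 ^ s := by positivity
    simp only [g]
    rw [← List.sum_toFinset _ (strs_nodup m), Nat.cast_sum, Finset.sum_div]
    refine Finset.sum_congr rfl fun τ _ => ?_
    push_cast
    rw [← min_div_div_right (show (0 : ℝ) ≤ K * 2 ^ s by positivity)]
    congr 1
    · rw [mul_div_mul_left _ _ hK'.ne']
    · rw [div_eq_div_iff (by positivity) (by positivity)]; ring
  have hglim : ∀ K m, 0 < K → Tendsto (fun s => (g K m s : ℝ) / (K * 2 ^ s)) atTop (𝓝 (G A K m)) := by
    intro K m hK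
    simp only [hgr K m _ hK]
    exact tendsto_finsetSum _ fun τ _ => (hlim τ).min tendsto_const_nhds
  have hgmono : ∀ K m, 0 < K → Monotone (fun s => (g K m s : ℝ) / (K * 2 ^ s)) := by
    intro K m hK s t hst
    simp only [hgr K m _ hK]
    exact Finset.sum_le_sum fun τ _ => min_le_min_right _ (hmono τ hst)
  let D : ℕ × ℕ × ℕ → ℕ → Bool := fun p j =>
    decide (p.1 * (κ p.2.2.unpair.1 * 2 ^ j.unpair.2) <
      p.2.1 * g (κ p.2.2.unpair.1) (p.2.2.unpair.2 + j.unpair.1) j.unpair.2)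
  have hD : Primrec₂ D := by
    have n : Primrec fun q : (ℕ × ℕ × ℕ) × ℕ => q.1.2.2 :=
      Primrec.snd.comp (Primrec.snd.comp Primrec.fst)
    have n1 := Primrec.fst.comp (Primrec.unpair.comp n)
    have n2 := Primrec.snd.comp (Primrec.unpair.comp n)
    have j1 : Primrec fun q : (ℕ × ℕ × ℕ) × ℕ => q.2.unpair.1 :=
      Primrec.fst.comp (Primrec.unpair.comp Primrec.snd)
    have j2 : Primrec fun q : (ℕ × ℕ × ℕ) × ℕ => q.2.unpair.2 :=
      Primrec.snd.comp (Primrec.unpair.comp Primrec.snd)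
    have := Primrec.nat_lt.comp
      (Primrec.nat_mul.comp (Primrec.fst.comp Primrec.fst : Primrec fun q : (ℕ × ℕ × ℕ) × ℕ => q.1.1)
        (Primrec.nat_mul.comp (hκ.comp n1) (primrec_two_pow.comp j2)))
      (Primrec.nat_mul.comp (Primrec.fst.comp (Primrec.snd.comp Primrec.fst))
        (hg.comp ((hκ.comp n1).pair ((Primrec.nat_add.comp n2 j1).pair j2))))
    exact this.decide.of_eq fun q => by simp [D]
  have key : ∀ a d k n0 : ℕ, 0 < d → ((∀ j, D (a, d, Nat.pair k n0) j = false) ↔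
      ∀ m, n0 ≤ m → G A (κ k) m ≤ (a : ℝ) / d) := by
    intro a d k n0 hd
    have hd' : (0 : ℝ) < d := by exact_mod_cast hd
    have hk := hκ0 k
    have hk' : (0 : ℝ) < κ k := by exact_mod_cast hk
    have e : ∀ m s, a * (κ k * 2 ^ s) < d * g (κ k) m s ↔
        (a : ℝ) / d < (g (κ k) m s : ℝ) / (κ k * 2 ^ s) := by
      intro m s
      rw [div_lt_div_iff₀ hd' (by positivity), mul_comm (g _ _ _ : ℝ)]
      exact_mod_cast Iff.rfl
    constructor
    · intro h m hm
      refine le_of_tendsto' (hglim _ m hk) fun s => ?_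
      have := h (Nat.pair (m - n0) s)
      simp only [D, Nat.unpair_pair, decide_eq_false_iff_not] at this
      rw [show n0 + (m - n0) = m by omega, e] at this
      exact not_lt.1 this
    · intro h j
      simp only [D, Nat.unpair_pair, decide_eq_false_iff_not]
      rw [e, not_lt]
      exact ((hgmono _ _ hk).ge_of_tendsto (hglim _ _ hk) _).trans (h _ (by omega))
  refine ⟨D, hD.to_comp, ?_, ?_⟩
  · intro a d n hd h
    rw [← Nat.pair_unpair n, key _ _ _ _ hd] at h
    exact b1 _ _ _ h
  · intro a d hd h
    obtain ⟨k, n0, h⟩ := b2 _ h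
    exact ⟨Nat.pair k n0, (key _ _ _ _ hd).2 h⟩

end RandProb

namespace RandProb

open Filter Topology

structure Good (A : List Bool → List Bool → Prop) : Prop where
  re : REPred fun p : List Bool × List Bool => A p.1 p.2
  down : ∀ τ τ' σ, τ' <+: τ → A τ σ → A τ' σ
  compat : ∀ τ τ' σ σ', σ <+: σ' → A τ σ → A τ' σ' → τ <+: τ' ∨ τ' <+: τ

/-- The oracles giving infinite output. -/
def InfS (A : List Bool → List Bool → Prop) : Set Cantor :=
  {X | ∀ k, ∃ τ, τ.length = k ∧ X ∈ V A τ}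

/-- `wt A m X` is the measure of `V τ` for the length `m` output `τ` on `X`. -/
noncomputable def wt (A : List Bool → List Bool → Prop) (m : ℕ) (X : Cantor) : ℝ :=
  ∑ τ ∈ (strs m).toFinset, (V A τ).indicator (fun _ => mu.real (V A τ)) X

noncomputable def delta (A : List Bool → List Bool → Prop) (X : Cantor) : ℝ := ⨅ m, wt A m X

/-- Oracles with infinite output, where the output is not an atom. -/
def ZeroS (A : List Bool → List Bool → Prop) : Set Cantor := {X | X ∈ InfS A ∧ delta A X = 0}

section
variable {A : List Bool → List Bool → Prop}

theorem measurableSet_V (A : List Bool → List Bool → Prop) (τ : List Bool) :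
    MeasurableSet (V A τ) := by
  have : V A τ = ⋃ n, {X | A τ (initSeg X n)} := by ext X; simp [V]
  rw [this]
  exact MeasurableSet.iUnion fun n => measurableSet_initSeg n _

theorem measurableSet_InfS (A : List Bool → List Bool → Prop) : MeasurableSet (InfS A) := by
  have : InfS A = ⋂ k : ℕ, ⋃ τ : List Bool, ⋃ _ : τ.length = k, V A τ := by
    ext X; simp [InfS]
  rw [this]
  exact MeasurableSet.iInter fun k => MeasurableSet.iUnion fun τ => MeasurableSet.iUnion fun _ =>
    measurableSet_V A τ

theorem V_anti (hA : Good A) {τ τ' : List Bool} (h : τ' <+: τ) : V A τ ⊆ V A τ' := by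
  rintro X ⟨n, hn⟩
  exact ⟨n, hA.down _ _ _ h hn⟩

theorem V_compat (hA : Good A) {τ τ' : List Bool} {X : Cantor} (h : X ∈ V A τ) (h' : X ∈ V A τ') :
    τ <+: τ' ∨ τ' <+: τ := by
  obtain ⟨n, hn⟩ := h
  obtain ⟨n', hn'⟩ := h'
  rcases le_total n n' with h | h
  · exact hA.compat _ _ _ _ (initSeg_prefix X h) hn hn'
  · exact (hA.compat _ _ _ _ (initSeg_prefix X h) hn' hn).symm

theorem V_unique (hA : Good A) {τ τ' : List Bool} {X : Cantor} (h : X ∈ V A τ) (h' : X ∈ V A τ')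
    (hl : τ.length = τ'.length) : τ = τ' := by
  rcases V_compat hA h h' with h | h
  · exact h.eq_of_length hl
  · exact (h.eq_of_length hl.symm).symm

theorem sum_V (hA : Good A) (f : List Bool → ℝ) {τ : List Bool} {X : Cantor} (h : X ∈ V A τ) :
    ∑ τ ∈ (strs τ.length).toFinset, (V A τ).indicator (fun _ => f τ) X = f τ := by
  rw [Finset.sum_eq_single τ]
  · rw [Set.indicator_of_mem h]
  · intro τ' h1 h2
    apply Set.indicator_of_notMem
    intro h3
    simp only [List.mem_toFinset, mem_strs] at h1
    exact h2 (V_unique hA h3 h h1)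
  · intro h1
    simp [mem_strs] at h1

theorem sum_notInf (hA : Good A) {X : Cantor} (h : X ∉ InfS A) :
    ∃ k, ∀ f : List Bool → ℝ, ∀ m, k ≤ m →
      ∑ τ ∈ (strs m).toFinset, (V A τ).indicator (fun _ => f τ) X = 0 := by
  simp only [InfS, Set.mem_ofPred_eq, not_forall, not_exists, not_and] at h
  obtain ⟨k, hk⟩ := h
  refine ⟨k, fun f m hm => Finset.sum_eq_zero fun τ hτ => Set.indicator_of_notMem ?_ _⟩
  intro hX
  simp only [List.mem_toFinset, mem_strs] at hτ
  exact hk (τ.take k) (by simp; omega) (V_anti hA (List.take_prefix _ _) hX)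

/-- output on `X ∈ InfS A` -/
theorem exists_out (hA : Good A) {X : Cantor} (h : X ∈ InfS A) :
    ∃ g : Cantor, ∀ k, X ∈ V A (initSeg g k) := by
  choose t ht using h
  have hp : ∀ m n, m ≤ n → t m <+: t n := by
    intro m n hmn
    rcases V_compat hA (ht m).2 (ht n).2 with h | h
    · exact h
    · have := h.length_le
      rw [(ht m).1, (ht n).1] at this
      obtain rfl : m = n := by omega
      exact List.prefix_rfl
  refine ⟨fun n => (t (n + 1)).getD n false, fun k => ?_⟩
  have : initSeg (fun n => (t (n + 1)).getD n false) k = t k := by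
    apply List.ext_getElem
    · simp [(ht k).1]
    · intro i h1 h2
      have hi : i < k := by simpa using h1
      have h3 : i < (t (i + 1)).length := by rw [(ht _).1]; omega
      simp only [initSeg, List.getElem_map, List.getElem_range]
      rw [List.getD_eq_getElem _ _ h3]
      exact (hp (i + 1) k (by omega)).getElem h3
  rw [this]
  exact (ht k).2

theorem wt_out (hA : Good A) {X g : Cantor} (h : ∀ k, X ∈ V A (initSeg g k)) (m : ℕ) :
    wt A m X = mu.real (V A (initSeg g m)) := by
  have := sum_V hA (fun τ => mu.real (V A τ)) (h m)
  rwa [initSeg_length] at this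

theorem wt_anti (hA : Good A) {X : Cantor} (h : X ∈ InfS A) : Antitone fun m => wt A m X := by
  obtain ⟨g, hg⟩ := exists_out hA h
  intro m n hmn
  simp only [wt_out hA hg]
  exact measureReal_mono (V_anti hA (initSeg_prefix g hmn))

theorem wt_nonneg (A : List Bool → List Bool → Prop) (m : ℕ) (X : Cantor) : 0 ≤ wt A m X :=
  Finset.sum_nonneg fun _ _ => Set.indicator_nonneg (fun _ _ => measureReal_nonneg) _

theorem delta_nonneg (A : List Bool → List Bool → Prop) (X : Cantor) : 0 ≤ delta A X :=
  le_ciInf fun m => wt_nonneg A m X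

theorem wt_tendsto (hA : Good A) {X : Cantor} (h : X ∈ InfS A) :
    Tendsto (fun m => wt A m X) atTop (𝓝 (delta A X)) :=
  tendsto_atTop_ciInf (wt_anti hA h) ⟨0, by rintro _ ⟨m, rfl⟩; exact wt_nonneg A m X⟩

theorem measurable_wt (A : List Bool → List Bool → Prop) (m : ℕ) : Measurable (wt A m) := by
  unfold wt
  exact Finset.measurable_sum _ fun τ _ => measurable_const.indicator (measurableSet_V A τ)

theorem measurable_delta (A : List Bool → List Bool → Prop) : Measurable (delta A) := by
  unfold delta
  exact Measurable.iInf fun m => measurable_wt A m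

theorem measurableSet_ZeroS (A : List Bool → List Bool → Prop) : MeasurableSet (ZeroS A) :=
  (measurableSet_InfS A).inter (measurable_delta A (measurableSet_singleton 0))

/-- the weighted sums -/
noncomputable def hK (A : List Bool → List Bool → Prop) (K m : ℕ) (X : Cantor) : ℝ :=
  ∑ τ ∈ (strs m).toFinset, (V A τ).indicator (fun _ => 1 / max 1 (K * mu.real (V A τ))) X

theorem integral_hK (A : List Bool → List Bool → Prop) {K : ℕ} (h0 : 0 < K) (m : ℕ) :
    ∫ X, hK A K m X ∂mu = G A K m := by
  unfold hK G
  rw [integral_finsetSum]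
  · refine Finset.sum_congr rfl fun τ _ => ?_
    rw [integral_indicator_const _ (measurableSet_V A τ), smul_eq_mul]
    have hK0 : (0 : ℝ) < K := by exact_mod_cast h0
    rcases le_total (K * mu.real (V A τ)) 1 with h | h
    · rw [max_eq_left h, min_eq_left]
      · simp
      · rw [le_div_iff₀ hK0]; linarith
    · have hv : 0 < mu.real (V A τ) := by
        by_contra hc
        have : mu.real (V A τ) = 0 := le_antisymm (not_lt.1 hc) measureReal_nonneg
        rw [this] at h; simp at h; linarith
      rw [max_eq_right h, min_eq_right]
      · field_simp
      · rw [div_le_iff₀ hK0]; linarith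
  · intro τ _
    exact (integrable_const _).indicator (measurableSet_V A τ)

/-- the limit -/
noncomputable def fK (A : List Bool → List Bool → Prop) (K : ℕ) (X : Cantor) : ℝ :=
  (InfS A).indicator (fun X => 1 / max 1 (K * delta A X)) X

theorem hK_tendsto (hA : Good A) (K : ℕ) (X : Cantor) :
    Tendsto (fun m => hK A K m X) atTop (𝓝 (fK A K X)) := by
  by_cases h : X ∈ InfS A
  · rw [fK, Set.indicator_of_mem h]
    obtain ⟨g, hg⟩ := exists_out hA h
    have : ∀ m, hK A K m X = 1 / max 1 (K * wt A m X) := by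
      intro m
      have := sum_V hA (fun τ => 1 / max 1 (K * mu.real (V A τ))) (hg m)
      rw [initSeg_length] at this
      rw [wt_out hA hg]
      exact this
    simp only [this]
    refine tendsto_const_nhds.div (tendsto_const_nhds.max (tendsto_const_nhds.mul (wt_tendsto hA h))) ?_
    have : (1 : ℝ) ≤ max 1 (K * delta A X) := le_max_left _ _
    linarith
  · rw [fK, Set.indicator_of_notMem h]
    obtain ⟨k, hk⟩ := sum_notInf hA h
    refine tendsto_const_nhds.congr' ?_
    filter_upwards [eventually_ge_atTop k] with m hm
    exact (hk _ m hm).symm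

theorem inv_max_bound (x : ℝ) : |1 / max 1 x| ≤ 1 := by
  have : (1 : ℝ) ≤ max 1 x := le_max_left _ _
  rw [abs_of_nonneg (by positivity), div_le_one (by linarith)]
  exact this

theorem hK_bound (hA : Good A) (K m : ℕ) (X : Cantor) : ‖hK A K m X‖ ≤ 1 := by
  by_cases h : ∃ τ, τ.length = m ∧ X ∈ V A τ
  · obtain ⟨τ, rfl, h⟩ := h
    rw [hK, sum_V hA _ h]
    exact inv_max_bound _
  · rw [hK, Finset.sum_eq_zero]
    · simp
    · intro τ hτ
      apply Set.indicator_of_notMem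
      intro hX
      exact h ⟨τ, by simpa [mem_strs] using hτ, hX⟩

theorem measurable_hK (A : List Bool → List Bool → Prop) (K m : ℕ) : Measurable (hK A K m) := by
  unfold hK
  exact Finset.measurable_sum _ fun τ _ => measurable_const.indicator (measurableSet_V A τ)

theorem measurable_fK (A : List Bool → List Bool → Prop) (K : ℕ) : Measurable (fK A K) := by
  have : Measurable fun X => 1 / max 1 (K * delta A X) :=
    measurable_const.div (measurable_const.max (measurable_const.mul (measurable_delta A)))
  exact this.indicator (measurableSet_InfS A)

theorem G_tendsto (hA : Good A) {K : ℕ} (h0 : 0 < K) :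
    Tendsto (fun m => G A K m) atTop (𝓝 (∫ X, fK A K X ∂mu)) := by
  simp only [← integral_hK A h0]
  refine tendsto_integral_of_dominated_convergence (fun _ => 1)
    (fun m => (measurable_hK A K m).aestronglyMeasurable) (integrable_const _)
    (fun m => Eventually.of_forall fun X => hK_bound hA K m X)
    (Eventually.of_forall fun X => hK_tendsto hA K X)

theorem fK_bound (A : List Bool → List Bool → Prop) (K : ℕ) (X : Cantor) : ‖fK A K X‖ ≤ 1 := by
  by_cases h : X ∈ InfS A
  · rw [fK, Set.indicator_of_mem h]; exact inv_max_bound _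
  · rw [fK, Set.indicator_of_notMem h]; simp

theorem fK_tendsto (X : Cantor) :
    Tendsto (fun K => fK A (K + 1) X) atTop (𝓝 ((ZeroS A).indicator (fun _ => (1 : ℝ)) X)) := by
  by_cases h : X ∈ InfS A
  · simp only [fK, Set.indicator_of_mem h]
    by_cases hd : delta A X = 0
    · rw [Set.indicator_of_mem (show X ∈ ZeroS A from ⟨h, hd⟩)]
      simp [hd]
    · rw [Set.indicator_of_notMem (show X ∉ ZeroS A from fun h => hd h.2)]
      have hpos : 0 < delta A X := lt_of_le_of_ne (delta_nonneg A X) (Ne.symm hd)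
      simp only [one_div]
      apply tendsto_inv_atTop_zero.comp
      refine tendsto_atTop_mono (fun K => le_max_right _ _) ?_
      have : Tendsto (fun K : ℕ => ((K + 1 : ℕ) : ℝ)) atTop atTop :=
        tendsto_natCast_atTop_atTop.comp (tendsto_add_atTop_nat 1)
      exact this.atTop_mul_const hpos
  · have h2 : X ∉ ZeroS A := fun h' => h h'.1
    simp only [fK, Set.indicator_of_notMem h, Set.indicator_of_notMem h2]
    exact tendsto_const_nhds

theorem int_fK_tendsto (A : List Bool → List Bool → Prop) :
    Tendsto (fun K => ∫ X, fK A (K + 1) X ∂mu) atTop (𝓝 (mu.real (ZeroS A))) := by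
  have : mu.real (ZeroS A) = ∫ X, (ZeroS A).indicator (fun _ => (1 : ℝ)) X ∂mu := by
    rw [integral_indicator_const _ (measurableSet_ZeroS A)]; simp
  rw [this]
  exact tendsto_integral_of_dominated_convergence (fun _ => 1)
    (fun m => (measurable_fK A _).aestronglyMeasurable) (integrable_const _)
    (fun m => Eventually.of_forall fun X => fK_bound A _ X)
    (Eventually.of_forall fun X => fK_tendsto X)

theorem int_fK_ge (A : List Bool → List Bool → Prop) (K : ℕ) :
    mu.real (ZeroS A) ≤ ∫ X, fK A K X ∂mu := by
  have : mu.real (ZeroS A) = ∫ X, (ZeroS A).indicator (fun _ => (1 : ℝ)) X ∂mu := by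
    rw [integral_indicator_const _ (measurableSet_ZeroS A)]; simp
  rw [this]
  apply integral_mono
  · exact (integrable_const _).indicator (measurableSet_ZeroS A)
  · exact Integrable.of_bound (measurable_fK A _).aestronglyMeasurable 1
      (Eventually.of_forall fun X => fK_bound A _ X)
  · intro X
    by_cases h : X ∈ ZeroS A
    · simp [fK, Set.indicator_of_mem h, Set.indicator_of_mem h.1, h.2]
    · simp only [Set.indicator_of_notMem h]
      apply Set.indicator_nonneg
      intro Y _
      have : (1 : ℝ) ≤ max 1 (K * delta A Y) := le_max_left _ _
      positivity

theorem int_f1 (hA : Good A) : ∫ X, fK A 1 X ∂mu = mu.real (InfS A) := by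
  have : mu.real (InfS A) = ∫ X, (InfS A).indicator (fun _ => (1 : ℝ)) X ∂mu := by
    rw [integral_indicator_const _ (measurableSet_InfS A)]; simp
  rw [this]
  congr 1
  ext X
  by_cases h : X ∈ InfS A
  · simp only [fK, Set.indicator_of_mem h]
    have : delta A X ≤ 1 := by
      obtain ⟨g, hg⟩ := exists_out hA h
      have := wt_anti hA h |>.le_of_tendsto (wt_tendsto hA h) 0
      refine this.trans ?_
      rw [wt_out hA hg]
      exact measureReal_le_one
    rw [max_eq_left (by simpa using this)]; simp
  · simp only [fK, Set.indicator_of_notMem h]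

theorem S2_InfS (hA : Good A) : S2 (mu.real (InfS A)) := by
  have hl := G_tendsto hA one_pos
  rw [int_f1 hA] at hl
  refine S2_of hA.re (κ := fun _ => 1) (Primrec.const 1) (fun _ => one_pos) _ ?_ ?_
  · intro _ n0 x h
    exact le_of_tendsto hl (eventually_atTop.2 ⟨n0, h⟩)
  · intro x hx
    obtain ⟨n0, h⟩ := eventually_atTop.1 (hl.eventually_le_const hx)
    exact ⟨0, n0, h⟩

theorem S2_ZeroS (hA : Good A) : S2 (mu.real (ZeroS A)) := by
  refine S2_of hA.re (κ := fun n => n + 1) Primrec.succ (fun _ => Nat.succ_pos _) _ ?_ ?_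
  · intro k n0 x h
    exact (int_fK_ge A (k + 1)).trans
      (le_of_tendsto (G_tendsto hA (Nat.succ_pos k)) (eventually_atTop.2 ⟨n0, h⟩))
  · intro x hx
    obtain ⟨k, hk⟩ := ((int_fK_tendsto A).eventually_lt_const hx).exists
    obtain ⟨n0, h⟩ := eventually_atTop.1
      ((G_tendsto hA (Nat.succ_pos k)).eventually_le_const hk)
    exact ⟨k, n0, h⟩

end
end RandProb

namespace RandProb

open Filter Topology

section
variable {A : List Bool → List Bool → Prop}

theorem re_of_primrecPred {α : Type*} [Primcodable α] {p : α → Prop} (hp : PrimrecPred p) :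
    REPred p := by
  have h : Primrec fun a => decide (p a) := hp.decide
  refine (re_of_stage (D := fun a _ => decide (p a)) (h.comp Primrec.fst).to₂.to_comp).of_eq ?_
  intro a; simp

theorem re_gt (hA : REPred fun p : List Bool × List Bool => A p.1 p.2) (a d : ℕ) (hd : 0 < d) :
    REPred fun τ => (a : ℝ) / d < mu.real (V A τ) := by
  obtain ⟨cnt, hcnt, hmono, hlim⟩ := approx hA
  have hp : Primrec₂ fun (τ : List Bool) (s : ℕ) => decide (a * 2 ^ s < d * cnt τ s) := by
    have : PrimrecRel fun (τ : List Bool) (s : ℕ) => a * 2 ^ s < d * cnt τ s :=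
      Primrec.nat_lt.comp (Primrec.nat_mul.comp (Primrec.const a) (primrec_two_pow.comp Primrec.snd))
        (Primrec.nat_mul.comp (Primrec.const d) hcnt)
    exact this.decide.of_eq fun q => by simp
  refine (re_of_stage hp.to_comp).of_eq fun τ => ?_
  have hd' : (0 : ℝ) < d := by exact_mod_cast hd
  have e : ∀ s, a * 2 ^ s < d * cnt τ s ↔ (a : ℝ) / d < (cnt τ s : ℝ) / 2 ^ s := by
    intro s
    rw [div_lt_div_iff₀ hd' (by positivity), mul_comm (cnt τ s : ℝ)]
    exact_mod_cast Iff.rfl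
  simp only [decide_eq_true_eq, e]
  constructor
  · rintro ⟨s, hs⟩
    exact hs.trans_le ((hmono τ).ge_of_tendsto (hlim τ) s)
  · intro h
    exact ((hlim τ).eventually_const_lt h).exists

theorem atom_computable (hA : Good A) {X g : Cantor} (hg : ∀ k, X ∈ V A (initSeg g k))
    (hd : 0 < delta A X) : Computable g := by
  have hX : X ∈ InfS A := fun k => ⟨_, by simp, hg k⟩
  have hlim := wt_tendsto hA hX
  have hanti := wt_anti hA hX
  simp only [wt_out hA hg] at hlim hanti
  obtain ⟨a, d, hd0, h1, h2⟩ := frac_between (x := delta A X / 2) (y := delta A X) (by linarith)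
    (by linarith)
  set q : ℝ := (a : ℝ) / d with hq
  obtain ⟨n0, hn0⟩ := (hlim.eventually_lt_const (show delta A X < 2 * q by linarith)).exists
  have hbit : ∀ b n, (g n = b ↔ ∃ τ : List Bool, q < mu.real (V A τ) ∧
      (τ.take n0 = initSeg g n0 ∧ τ[n]? = some b)) := by
    intro b n
    constructor
    · intro hb
      refine ⟨initSeg g (max n0 (n + 1)), h2.trans_le (hanti.le_of_tendsto hlim _), ?_, ?_⟩
      · obtain ⟨u, hu⟩ := initSeg_prefix g (le_max_left n0 (n + 1))
        rw [← hu, List.take_left' (by simp)]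
      · simp [initSeg, hb]
    · rintro ⟨τ, hτ, ht, hb⟩
      have hp : initSeg g n0 <+: τ := ht ▸ List.take_prefix _ _
      have hle : n0 ≤ τ.length := by simpa using hp.length_le
      have heq : τ = initSeg g τ.length := by
        by_contra hne
        have hdisj : Disjoint (V A τ) (V A (initSeg g τ.length)) :=
          Set.disjoint_left.2 fun Y hY hY' => hne (V_unique hA hY hY' (by simp))
        have hsub : V A τ ∪ V A (initSeg g τ.length) ⊆ V A (initSeg g n0) :=
          Set.union_subset (V_anti hA hp) (V_anti hA (initSeg_prefix g hle))
        have h3 := measureReal_mono (μ := mu) hsub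
        rw [measureReal_union hdisj (measurableSet_V A _)] at h3
        have h4 := hanti.le_of_tendsto hlim τ.length
        linarith
      rw [heq] at hb
      obtain ⟨hlt, hb⟩ := List.getElem?_eq_some_iff.1 hb
      simpa [initSeg] using hb
  have hre : ∀ b, REPred fun n => g n = b := by
    intro b
    have h3 : REPred fun p : ℕ × List Bool => q < mu.real (V A p.2) ∧
        (p.2.take n0 = initSeg g n0 ∧ p.2[p.1]? = some b) := by
      refine re_and (re_comp (re_gt hA.re a d hd0) Computable.snd) (re_of_primrecPred ?_)
      refine PrimrecPred.and ?_ ?_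
      · exact Primrec.eq.comp (Primrec.list_take.comp (Primrec.const n0) Primrec.snd)
          (Primrec.const _)
      · exact Primrec.eq.comp (Primrec.list_getElem?.comp Primrec.snd Primrec.fst)
          (Primrec.const _)
    exact (re_exists h3).of_eq fun n => (hbit b n).symm
  have hc : ComputablePred fun n => g n = true := by
    refine ComputablePred.computable_iff_re_compl_re'.2 ⟨hre true, (hre false).of_eq fun n => ?_⟩
    simp
  obtain ⟨f, hf, hfe⟩ := ComputablePred.computable_iff.1 hc
  refine hf.of_eq fun n => ?_
  have := congrFun hfe n
  rw [Bool.eq_iff_iff]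
  simp only [← this]

theorem countable_computable : {g : Cantor | Computable g}.Countable := by
  refine (Set.countable_range fun c : Nat.Partrec.Code => fun n : ℕ =>
    decide (Encodable.encode true ∈ c.eval n)).mono ?_
  intro g hg
  obtain ⟨c, hc⟩ := Nat.Partrec.Code.exists_code.1 (Partrec.nat_iff.1
    (Computable.encode.comp hg : Computable fun n => Encodable.encode (g n)).partrec)
  refine ⟨c, ?_⟩
  funext n
  simp only [hc]
  cases h : g n <;> simp [h]

/-- The oracles giving a computable stream. -/
def CompS (A : List Bool → List Bool → Prop) : Set Cantor :=
  {X | ∃ g : Cantor, Computable g ∧ ∀ k, X ∈ V A (initSeg g k)}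

theorem mu_CompS (hA : Good A) : mu.real (CompS A) = mu.real (InfS A) - mu.real (ZeroS A) := by
  have hsub : InfS A \ ZeroS A ⊆ CompS A := by
    rintro X ⟨h1, h2⟩
    obtain ⟨g, hg⟩ := exists_out hA h1
    refine ⟨g, atom_computable hA hg ?_, hg⟩
    exact lt_of_le_of_ne (delta_nonneg A X) fun h => h2 ⟨h1, h.symm⟩
  have hsup : CompS A ⊆ (InfS A \ ZeroS A) ∪ ⋃ g ∈ {g : Cantor | Computable g ∧
      mu {X | ∀ k, X ∈ V A (initSeg g k)} = 0}, {X | ∀ k, X ∈ V A (initSeg g k)} := by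
    rintro X ⟨g, hg, hX⟩
    have h1 : X ∈ InfS A := fun k => ⟨_, by simp, hX k⟩
    by_cases h2 : X ∈ ZeroS A
    · right
      simp only [Set.mem_iUnion]
      refine ⟨g, ⟨hg, ?_⟩, hX⟩
      have hlim := wt_tendsto hA h1
      simp only [wt_out hA hX, h2.2] at hlim
      have h3 : mu.real {X | ∀ k, X ∈ V A (initSeg g k)} ≤ 0 :=
        ge_of_tendsto' hlim fun m => measureReal_mono fun Y hY => hY m
      exact (measureReal_eq_zero_iff (measure_ne_top _ _)).1 (le_antisymm h3 measureReal_nonneg)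
    · exact Or.inl ⟨h1, h2⟩
  have hnull : mu (⋃ g ∈ {g : Cantor | Computable g ∧
      mu {X | ∀ k, X ∈ V A (initSeg g k)} = 0}, {X | ∀ k, X ∈ V A (initSeg g k)}) = 0 :=
    (measure_biUnion_null_iff (countable_computable.mono fun g h => h.1)).2 fun g h => h.2
  have e : mu (CompS A) = mu (InfS A \ ZeroS A) := by
    refine le_antisymm ((measure_mono hsup).trans ((measure_union_le _ _).trans ?_))
      (measure_mono hsub)
    rw [hnull, add_zero]
  rw [measureReal_def, e, ← measureReal_def]
  exact measureReal_sdiff (fun X h => h.1) (measurableSet_ZeroS A)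

theorem not_random_CompS (hA : Good A) : ¬ NRandom 3 (mu.real (CompS A)) := by
  rw [mu_CompS hA]
  exact not_random (S2_InfS hA) (S2_ZeroS hA) measureReal_nonneg
    (measureReal_mono fun X h => h.1)

theorem not_random_diff {A' : List Bool → List Bool → Prop} (hA : Good A) (hA' : Good A')
    (h : InfS A' ⊆ InfS A) : ¬ NRandom 3 (mu.real (InfS A \ InfS A')) := by
  rw [measureReal_sdiff h (measurableSet_InfS A')]
  exact not_random (S2_InfS hA) (S2_InfS hA') measureReal_nonneg (measureReal_mono h)

end
end RandProb

namespace RandProb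

section
variable {A : List Bool → List Bool → Prop}

theorem re_bind {α β : Type*} [Primcodable α] [Primcodable β] {f : α →. β} (hf : Partrec f)
    {q : α × β → Prop} (hq : REPred q) : REPred fun a => ∃ b ∈ f a, q (a, b) := by
  have h := Partrec.bind hf (show Partrec₂ fun a b => Part.assert (q (a, b)) fun _ => Part.some () from hq)
  refine h.dom_re.of_eq fun a => ?_
  rw [Part.dom_iff_mem]
  constructor
  · rintro ⟨y, hy⟩
    obtain ⟨b, hb, hy⟩ := Part.mem_bind_iff.1 hy
    obtain ⟨hq, -⟩ := Part.mem_assert_iff.1 hy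
    exact ⟨b, hb, hq⟩
  · rintro ⟨b, hb, hq⟩
    exact ⟨(), Part.mem_bind_iff.2 ⟨b, hb, Part.mem_assert_iff.2 ⟨hq, Part.mem_some _⟩⟩⟩

theorem re_forall_lt {α : Type*} [Primcodable α] {p : ℕ × α → Prop} (hp : REPred p) :
    REPred fun q : ℕ × α => ∀ i < q.1, p (i, q.2) := by
  obtain ⟨D, hD, h1, h2⟩ := re_stage hp
  have hR : PrimrecRel fun (i : ℕ) (q : α × ℕ) => D (i, q.1) q.2 = true :=
    Primrec.eq.comp (hD.comp (Primrec.fst.pair (Primrec.fst.comp Primrec.snd))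
      (Primrec.snd.comp Primrec.snd)) (Primrec.const true)
  have h3 := hR.forall_mem_list
  have f1 : Primrec fun r : (ℕ × α) × ℕ => List.range r.1.1 :=
    Primrec.list_range.comp (Primrec.fst.comp Primrec.fst)
  have f2 : Primrec fun r : (ℕ × α) × ℕ => (r.1.2, r.2) :=
    (Primrec.snd.comp Primrec.fst).pair Primrec.snd
  have h4 : Primrec₂ fun (q : ℕ × α) (s : ℕ) =>
      decide (∀ i ∈ List.range q.1, D (i, q.2) s = true) :=
    (h3.comp f1 f2).decide.of_eq fun r => by simp
  refine (re_of_stage h4.to_comp).of_eq fun q => ?_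
  simp only [decide_eq_true_eq, List.mem_range]
  constructor
  · rintro ⟨s, hs⟩ i hi
    exact (h1 _).2 ⟨s, hs i hi⟩
  · intro h
    choose! s hs using fun i hi => (h1 (i, q.2)).1 (h i hi)
    refine ⟨(Finset.range q.1).sup s, fun i hi => h2 _ _ _ ?_ (hs i hi)⟩
    exact Finset.le_sup (f := s) (Finset.mem_range.2 hi)

theorem prefix_iff_take {α : Type*} {ρ τ : List α} : ρ <+: τ ↔ τ.take ρ.length = ρ := by
  rw [List.prefix_iff_eq_take]; exact eq_comm

theorem primrec_prefix : PrimrecRel fun ρ τ : List Bool => ρ <+: τ :=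
  (Primrec.eq.comp (Primrec.list_take.comp (Primrec.list_length.comp Primrec.fst) Primrec.snd)
    Primrec.fst).of_eq fun _ => prefix_iff_take.symm

/-- Enumerating the zeros of the output. -/
def ZA (A : List Bool → List Bool → Prop) (ρ σ : List Bool) : Prop :=
  ∃ τ, A τ σ ∧ ρ <+: τ.filter fun b => !b

theorem good_ZA (hA : Good A) : Good (ZA A) where
  re := by
    have hf : Primrec fun τ : List Bool => τ.filter fun b => !b :=
      (Primrec.listFilter (p := fun b : Bool => b = false)
        (Primrec.eq.comp Primrec.id (Primrec.const false))).of_eq fun l => by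
          congr 1; funext b; cases b <;> simp
    have h1 : REPred fun q : (List Bool × List Bool) × List Bool => A q.2 q.1.2 :=
      re_comp hA.re (Computable.snd.pair (Computable.snd.comp Computable.fst))
    have h2 : REPred fun q : (List Bool × List Bool) × List Bool =>
        q.1.1 <+: q.2.filter fun b => !b :=
      re_of_primrecPred (primrec_prefix.comp (Primrec.fst.comp Primrec.fst) (hf.comp Primrec.snd))
    exact re_exists (re_and h1 h2)
  down := by
    rintro τ τ' σ h ⟨u, h1, h2⟩
    exact ⟨u, h1, h.trans h2⟩
  compat := by
    rintro τ τ' σ σ' h ⟨u, h1, h2⟩ ⟨u', h1', h2'⟩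
    rcases hA.compat _ _ _ _ h h1 h1' with h3 | h3
    · exact List.prefix_or_prefix_of_prefix (h2.trans (h3.filter _)) h2'
    · exact List.prefix_or_prefix_of_prefix h2 (h2'.trans (h3.filter _))

theorem InfS_ZA (hA : Good A) : InfS (ZA A) ⊆ InfS A := by
  intro X hX k
  obtain ⟨ρ, hρ, n, τ, h1, h2⟩ := hX k
  have : k ≤ τ.length := by
    rw [← hρ]; exact h2.length_le.trans (List.length_filter_le _ _)
  exact ⟨τ.take k, by simp; omega, n, hA.down _ _ _ (List.take_prefix _ _) h1⟩

theorem out_unique (hA : Good A) {X g : Cantor} (hg : ∀ k, X ∈ V A (initSeg g k)) {τ : List Bool}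
    (h : X ∈ V A τ) : τ = initSeg g τ.length :=
  V_unique hA h (hg _) (by simp)

theorem zeros_le {g : Cantor} {t : ℕ} (h : ∀ k, t ≤ k → g k = true) (n : ℕ) :
    ((initSeg g n).filter fun b => !b).length ≤ min n t := by
  induction n with
  | zero => simp [initSeg]
  | succ n ih =>
    rw [initSeg_succ, List.filter_append, List.length_append]
    by_cases hn : t ≤ n
    · simp [h n hn]; omega
    · have : ([g n].filter fun b => !b).length ≤ 1 := List.length_filter_le _ _
      omega

theorem zeros_ge {g : Cantor} (h : ∀ t, ∃ k, t ≤ k ∧ g k = false) (m : ℕ) :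
    ∃ n, m ≤ ((initSeg g n).filter fun b => !b).length := by
  induction m with
  | zero => exact ⟨0, Nat.zero_le _⟩
  | succ m ih =>
    obtain ⟨n, hn⟩ := ih
    obtain ⟨k, hk, hg⟩ := h n
    refine ⟨k + 1, ?_⟩
    rw [initSeg_succ, List.filter_append, List.length_append]
    have := ((initSeg_prefix g hk).filter fun b => !b).length_le
    simp [hg]; omega

theorem cof_eq (hA : Good A) : InfS A \ InfS (ZA A) =
    {X | ∃ g : Cantor, (∀ k, X ∈ V A (initSeg g k)) ∧ ∃ t, ∀ k, t ≤ k → g k = true} := by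
  ext X
  constructor
  · rintro ⟨h1, h2⟩
    obtain ⟨g, hg⟩ := exists_out hA h1
    refine ⟨g, hg, ?_⟩
    by_contra hc
    push Not at hc
    apply h2
    intro m
    obtain ⟨n, hn⟩ := zeros_ge (g := g) (fun t => by simpa using hc t) m
    obtain ⟨i, hi⟩ := hg n
    exact ⟨_, by rw [List.length_take]; exact min_eq_left hn, i, _, hi, List.take_prefix _ _⟩
  · rintro ⟨g, hg, t, ht⟩
    refine ⟨fun k => ⟨_, by simp, hg k⟩, fun h => ?_⟩
    obtain ⟨ρ, hρ, n, τ, h1, h2⟩ := h (t + 1)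
    have e := out_unique hA hg (show X ∈ V A τ from ⟨n, h1⟩)
    have h3 := h2.length_le
    rw [e] at h3
    have := zeros_le ht τ.length
    omega

theorem not_random_cof (hA : Good A) : ¬ NRandom 3 (mu.real
    {X | ∃ g : Cantor, (∀ k, X ∈ V A (initSeg g k)) ∧ ∃ t, ∀ k, t ≤ k → g k = true}) := by
  rw [← cof_eq hA]
  exact not_random_diff hA (good_ZA hA) (InfS_ZA hA)

/-! ### Monotone machines -/

def MA (N : MonoMachine) (τ σ : List Bool) : Prop := ∃ a ∈ N.f σ, τ <+: a

theorem good_MA (N : MonoMachine) : Good (MA N) where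
  re := by
    have h2 : REPred fun q : (List Bool × List Bool) × List Bool => q.1.1 <+: q.2 :=
      re_of_primrecPred (primrec_prefix.comp (Primrec.fst.comp Primrec.fst) Primrec.snd)
    exact re_bind (N.partrec.comp Computable.snd) h2
  down := by
    rintro τ τ' σ h ⟨a, h1, h2⟩
    exact ⟨a, h1, h.trans h2⟩
  compat := by
    rintro τ τ' σ σ' h ⟨a, h1, h2⟩ ⟨a', h1', h2'⟩
    exact List.prefix_or_prefix_of_prefix (h2.trans (N.mono h h1 h1')) h2'

theorem MonoINF_eq (N : MonoMachine) : MonoINF N = InfS (MA N) := by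
  ext X
  constructor
  · intro h k
    obtain ⟨n, a, ha, hk⟩ := h k
    exact ⟨a.take k, by simp; omega, n, a, ha, List.take_prefix _ _⟩
  · intro h k
    obtain ⟨τ, hk, n, a, ha, hp⟩ := h k
    exact ⟨n, a, ha, hk ▸ hp.length_le⟩

theorem hasBit_iff (N : MonoMachine) {X g : Cantor} (hg : ∀ k, X ∈ V (MA N) (initSeg g k))
    (k : ℕ) (b : Bool) : N.hasBit X k b ↔ g k = b := by
  constructor
  · rintro ⟨n, a, ha, hb⟩
    have e := out_unique (good_MA N) hg (show X ∈ V (MA N) a from ⟨n, a, ha, List.prefix_rfl⟩)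
    rw [e] at hb
    obtain ⟨hlt, hb⟩ := List.getElem?_eq_some_iff.1 hb
    simpa [initSeg] using hb
  · intro hb
    obtain ⟨n, a, ha, hp⟩ := hg (k + 1)
    refine ⟨n, a, ha, ?_⟩
    obtain ⟨u, rfl⟩ := hp
    rw [List.getElem?_append_left (by simp)]
    simp [initSeg, hb]

theorem mono_cof (N : MonoMachine) : {X : Cantor | X ∈ MonoINF N ∧
      ∃ t, ∀ k, t ≤ k → N.hasBit X k true} =
    {X | ∃ g : Cantor, (∀ k, X ∈ V (MA N) (initSeg g k)) ∧ ∃ t, ∀ k, t ≤ k → g k = true} := by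
  ext X
  rw [MonoINF_eq]
  constructor
  · rintro ⟨h1, t, h2⟩
    obtain ⟨g, hg⟩ := exists_out (good_MA N) h1
    exact ⟨g, hg, t, fun k hk => (hasBit_iff N hg k true).1 (h2 k hk)⟩
  · rintro ⟨g, hg, t, h2⟩
    exact ⟨fun k => ⟨_, by simp, hg k⟩, t, fun k hk => (hasBit_iff N hg k true).2 (h2 k hk)⟩

theorem mono_comp (N : MonoMachine) : {X : Cantor | X ∈ MonoINF N ∧
      ∃ g : ℕ → Bool, Computable g ∧ ∀ k, N.hasBit X k (g k)} = CompS (MA N) := by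
  ext X
  rw [MonoINF_eq]
  constructor
  · rintro ⟨h1, g, hc, h2⟩
    obtain ⟨g', hg⟩ := exists_out (good_MA N) h1
    have : g' = g := funext fun k => (hasBit_iff N hg k _).1 (h2 k)
    exact ⟨g, hc, this ▸ hg⟩
  · rintro ⟨g, hc, hg⟩
    exact ⟨fun k => ⟨_, by simp, hg k⟩, g, hc, fun k => (hasBit_iff N hg k _).2 rfl⟩

end
end RandProb

namespace RandProb

/-! ### Oracle machines with finite oracles -/

/-- Evaluation with a finite oracle. -/
def evalS (σ : List Bool) : CodeO → ℕ →. ℕ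
  | .zero => pure 0
  | .succ => Nat.succ
  | .left => ↑fun n : ℕ => n.unpair.1
  | .right => ↑fun n : ℕ => n.unpair.2
  | .oracle => fun n : ℕ => Part.ofOption (σ[n]?.map fun b => cond b 1 0)
  | .pair cf cg => fun n => Nat.pair <$> evalS σ cf n <*> evalS σ cg n
  | .comp cf cg => fun n => evalS σ cg n >>= evalS σ cf
  | .prec cf cg =>
    Nat.unpaired fun a n =>
      n.rec (evalS σ cf a) fun y IH => do
        let i ← IH
        evalS σ cg (Nat.pair a (Nat.pair y i))
  | .rfind' cf =>
    Nat.unpaired fun a m =>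
      (Nat.rfind fun n => (fun m => m = 0) <$> evalS σ cf (Nat.pair a (n + m))).map (· + m)

theorem mem_pair {f g : Part ℕ} {v : ℕ} : v ∈ Nat.pair <$> f <*> g ↔
    ∃ x ∈ f, ∃ y ∈ g, v = Nat.pair x y := by
  simp [Seq.seq, eq_comm]

theorem mem_test {f : Part ℕ} {b : Bool} :
    b ∈ ((fun m => decide (m = 0)) <$> f : Part Bool) ↔ ∃ x ∈ f, decide (x = 0) = b := by
  simp

theorem rfind_transfer {f g : ℕ → Part ℕ} {m v : ℕ}
    (h : v ∈ (Nat.rfind fun n => (fun m => decide (m = 0)) <$> f n).map (· + m))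
    (hfg : ∀ n, n + m ≤ v → ∀ x ∈ f n, x ∈ g n) :
    v ∈ (Nat.rfind fun n => (fun m => decide (m = 0)) <$> g n).map (· + m) := by
  obtain ⟨n, hn, rfl⟩ := (Part.mem_map_iff _).1 h
  refine (Part.mem_map_iff _).2 ⟨n, ?_, rfl⟩
  obtain ⟨h1, h2⟩ := Nat.mem_rfind.1 hn
  refine Nat.mem_rfind.2 ⟨?_, fun {k} hk => ?_⟩
  · obtain ⟨x, hx, e⟩ := mem_test.1 h1
    exact mem_test.2 ⟨x, hfg n le_rfl x hx, e⟩
  · obtain ⟨x, hx, e⟩ := mem_test.1 (h2 hk)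
    exact mem_test.2 ⟨x, hfg k (by omega) x hx, e⟩

theorem rfind_vals {f : ℕ → Part ℕ} {m v : ℕ}
    (h : v ∈ (Nat.rfind fun n => (fun m => decide (m = 0)) <$> f n).map (· + m)) (n : ℕ)
    (hn : n + m ≤ v) : ∃ x, x ∈ f n := by
  obtain ⟨k, hk, rfl⟩ := (Part.mem_map_iff _).1 h
  obtain ⟨h1, h2⟩ := Nat.mem_rfind.1 hk
  rcases Nat.lt_or_ge n k with h | h
  · obtain ⟨x, hx, e⟩ := mem_test.1 (h2 h)
    exact ⟨x, hx⟩
  · obtain rfl : n = k := by omega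
    obtain ⟨x, hx, e⟩ := mem_test.1 h1
    exact ⟨x, hx⟩

theorem evalS_mono {σ σ' : List Bool} (h : σ <+: σ') (c : CodeO) :
    ∀ n v, v ∈ evalS σ c n → v ∈ evalS σ' c n := by
  induction c with
  | zero => exact fun n v h => h
  | succ => exact fun n v h => h
  | left => exact fun n v h => h
  | right => exact fun n v h => h
  | oracle =>
    intro n v hv
    simp only [evalS, Part.mem_ofOption, Option.mem_def, Option.map_eq_some_iff] at hv ⊢
    obtain ⟨b, hb, e⟩ := hv
    obtain ⟨u, rfl⟩ := h
    obtain ⟨hlt, _⟩ := List.getElem?_eq_some_iff.1 hb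
    exact ⟨b, by rw [List.getElem?_append_left hlt, hb], e⟩
  | pair cf cg hf hg =>
    intro n v hv
    obtain ⟨x, hx, y, hy, rfl⟩ := mem_pair.1 hv
    exact mem_pair.2 ⟨x, hf _ _ hx, y, hg _ _ hy, rfl⟩
  | comp cf cg hf hg =>
    intro n v hv
    obtain ⟨x, hx, hy⟩ := Part.mem_bind_iff.1 hv
    exact Part.mem_bind_iff.2 ⟨x, hg _ _ hx, hf _ _ hy⟩
  | prec cf cg hf hg =>
    intro n
    obtain ⟨a, n, rfl⟩ : ∃ a b, n = Nat.pair a b := ⟨_, _, (Nat.pair_unpair n).symm⟩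
    simp only [evalS, Nat.unpaired, Nat.unpair_pair]
    induction n with
    | zero => exact fun v hv => hf _ _ hv
    | succ n ih =>
      intro v hv
      obtain ⟨x, hx, hy⟩ := Part.mem_bind_iff.1 hv
      exact Part.mem_bind_iff.2 ⟨x, ih _ hx, hg _ _ hy⟩
  | rfind' cf hf =>
    intro n v hv
    exact rfind_transfer hv fun k _ x hx => hf _ _ hx

theorem evalS_sound (X : Cantor) (k : ℕ) (c : CodeO) :
    ∀ n v, v ∈ evalS (initSeg X k) c n → v ∈ c.eval (oX X) n := by
  induction c with
  | zero => exact fun n v h => h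
  | succ => exact fun n v h => h
  | left => exact fun n v h => h
  | right => exact fun n v h => h
  | oracle =>
    intro n v hv
    simp only [evalS, Part.mem_ofOption, Option.mem_def, Option.map_eq_some_iff] at hv
    obtain ⟨b, hb, e⟩ := hv
    obtain ⟨hlt, hb⟩ := List.getElem?_eq_some_iff.1 hb
    refine Part.mem_some_iff.2 ?_
    rw [← e, ← hb]
    simp [initSeg, oX]
  | pair cf cg hf hg =>
    intro n v hv
    obtain ⟨x, hx, y, hy, rfl⟩ := mem_pair.1 hv
    exact mem_pair.2 ⟨x, hf _ _ hx, y, hg _ _ hy, rfl⟩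
  | comp cf cg hf hg =>
    intro n v hv
    obtain ⟨x, hx, hy⟩ := Part.mem_bind_iff.1 hv
    exact Part.mem_bind_iff.2 ⟨x, hg _ _ hx, hf _ _ hy⟩
  | prec cf cg hf hg =>
    intro n
    obtain ⟨a, n, rfl⟩ : ∃ a b, n = Nat.pair a b := ⟨_, _, (Nat.pair_unpair n).symm⟩
    simp only [evalS, CodeO.eval, Nat.unpaired, Nat.unpair_pair]
    induction n with
    | zero => exact fun v hv => hf _ _ hv
    | succ n ih =>
      intro v hv
      obtain ⟨x, hx, hy⟩ := Part.mem_bind_iff.1 hv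
      exact Part.mem_bind_iff.2 ⟨x, ih _ hx, hg _ _ hy⟩
  | rfind' cf hf =>
    intro n v hv
    exact rfind_transfer hv fun k _ x hx => hf _ _ hx

theorem evalS_use (X : Cantor) (c : CodeO) :
    ∀ n v, v ∈ c.eval (oX X) n → ∃ k, v ∈ evalS (initSeg X k) c n := by
  induction c with
  | zero => exact fun n v h => ⟨0, h⟩
  | succ => exact fun n v h => ⟨0, h⟩
  | left => exact fun n v h => ⟨0, h⟩
  | right => exact fun n v h => ⟨0, h⟩
  | oracle =>
    intro n v hv
    refine ⟨n + 1, ?_⟩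
    simp only [evalS, Part.mem_ofOption, Option.mem_def, Option.map_eq_some_iff]
    refine ⟨X n, by simp [initSeg], (Part.mem_some_iff.1 hv).symm⟩
  | pair cf cg hf hg =>
    intro n v hv
    obtain ⟨x, hx, y, hy, rfl⟩ := mem_pair.1 hv
    obtain ⟨k1, h1⟩ := hf _ _ hx
    obtain ⟨k2, h2⟩ := hg _ _ hy
    exact ⟨max k1 k2, mem_pair.2 ⟨x, evalS_mono (initSeg_prefix X (le_max_left _ _)) _ _ _ h1,
      y, evalS_mono (initSeg_prefix X (le_max_right _ _)) _ _ _ h2, rfl⟩⟩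
  | comp cf cg hf hg =>
    intro n v hv
    obtain ⟨x, hx, hy⟩ := Part.mem_bind_iff.1 hv
    obtain ⟨k1, h1⟩ := hg _ _ hx
    obtain ⟨k2, h2⟩ := hf _ _ hy
    exact ⟨max k1 k2, Part.mem_bind_iff.2
      ⟨x, evalS_mono (initSeg_prefix X (le_max_left _ _)) _ _ _ h1,
        evalS_mono (initSeg_prefix X (le_max_right _ _)) _ _ _ h2⟩⟩
  | prec cf cg hf hg =>
    intro n
    obtain ⟨a, n, rfl⟩ : ∃ a b, n = Nat.pair a b := ⟨_, _, (Nat.pair_unpair n).symm⟩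
    induction n with
    | zero =>
      simp only [evalS, CodeO.eval, Nat.unpaired, Nat.unpair_pair]
      exact fun v hv => hf _ _ hv
    | succ n ih =>
      intro v hv
      have hv' : v ∈ (CodeO.prec cf cg).eval (oX X) (Nat.pair a n) >>= fun i =>
          cg.eval (oX X) (Nat.pair a (Nat.pair n i)) := by
        simpa only [CodeO.eval, Nat.unpaired, Nat.unpair_pair] using hv
      obtain ⟨x, hx, hy⟩ := Part.mem_bind_iff.1 hv'
      obtain ⟨k1, h1⟩ := ih _ hx
      obtain ⟨k2, h2⟩ := hg _ _ hy
      refine ⟨max k1 k2, ?_⟩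
      have : v ∈ evalS (initSeg X (max k1 k2)) (CodeO.prec cf cg) (Nat.pair a n) >>= fun i =>
          evalS (initSeg X (max k1 k2)) cg (Nat.pair a (Nat.pair n i)) :=
        Part.mem_bind_iff.2
          ⟨x, evalS_mono (initSeg_prefix X (le_max_left _ _)) _ _ _ h1,
            evalS_mono (initSeg_prefix X (le_max_right _ _)) _ _ _ h2⟩
      simpa only [evalS, Nat.unpaired, Nat.unpair_pair] using this
  | rfind' cf hf =>
    intro n v hv
    have h1 : ∀ k, k + n.unpair.2 ≤ v → ∃ s, ∀ x ∈ cf.eval (oX X) (Nat.pair n.unpair.1 (k + n.unpair.2)),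
        x ∈ evalS (initSeg X s) cf (Nat.pair n.unpair.1 (k + n.unpair.2)) := by
      intro k hk
      obtain ⟨x, hx⟩ := rfind_vals hv k hk
      obtain ⟨s, hs⟩ := hf _ _ hx
      refine ⟨s, fun y hy => ?_⟩
      rwa [Part.mem_unique hy hx]
    choose! s hs using h1
    refine ⟨(Finset.range (v + 1)).sup s, rfind_transfer hv fun k hk x hx => ?_⟩
    refine evalS_mono (initSeg_prefix X ?_) _ _ _ (hs k hk x hx)
    exact Finset.le_sup (f := s) (Finset.mem_range.2 (by omega))

theorem partrec_pair_step {α : Type} [Primcodable α] {f g : α →. ℕ} (hf : Partrec f)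
    (hg : Partrec g) : Partrec fun a => Nat.pair <$> f a <*> g a := by
  have hg1 : Partrec fun q : α × ℕ => g q.1 := hg.comp Computable.fst
  have hc : Computable₂ fun (q : α × ℕ) (y : ℕ) => Nat.pair q.2 y :=
    Primrec₂.natPair.to_comp.comp (Computable.snd.comp Computable.fst) Computable.snd
  have h2 : Partrec₂ fun (a : α) (x : ℕ) => (g a).map fun y => Nat.pair x y := Partrec.map hg1 hc
  refine (Partrec.bind hf h2).of_eq fun p => ?_
  ext v
  simp [Seq.seq]

theorem partrec_rfind_step {α : Type} [Primcodable α] {F : α → ℕ →. ℕ} (hF : Partrec₂ F)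
    {m : α → ℕ} (hm : Computable m) :
    Partrec fun a => (Nat.rfind fun n => (fun m => decide (m = 0)) <$> F a n).map (· + m a) := by
  have hd : Primrec fun m : ℕ => decide (m = 0) :=
    (Primrec.eq.comp Primrec.id (Primrec.const 0)).decide.of_eq fun _ => by simp
  have hd2 : Computable₂ fun (_ : α × ℕ) (x : ℕ) => decide (x = 0) :=
    hd.to_comp.comp Computable.snd
  have h1 : Partrec₂ fun (a : α) (n : ℕ) => (F a n).map fun x => decide (x = 0) :=
    Partrec.map hF hd2
  have ha : Computable₂ fun (a : α) (n : ℕ) => n + m a :=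
    Primrec.nat_add.to_comp.comp Computable.snd (hm.comp Computable.fst)
  exact Partrec.map (Partrec.rfind h1) ha

theorem evalS_partrec (c : CodeO) : Partrec₂ fun (σ : List Bool) (n : ℕ) => evalS σ c n := by
  induction c with
  | zero => exact (Computable.const 0).partrec
  | succ => exact (Computable.succ.comp Computable.snd).partrec
  | left => exact (Computable.fst.comp (Computable.unpair.comp Computable.snd)).partrec
  | right => exact (Computable.snd.comp (Computable.unpair.comp Computable.snd)).partrec
  | oracle =>
    have : Primrec fun p : List Bool × ℕ => p.1[p.2]?.map fun b => cond b 1 0 :=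
      Primrec.option_map (Primrec.list_getElem?.comp Primrec.fst Primrec.snd)
        (Primrec.cond Primrec.snd (Primrec.const 1) (Primrec.const 0)).to₂
    exact Computable.ofOption this.to_comp
  | pair cf cg hf hg =>
    exact partrec_pair_step hf hg
  | comp cf cg hf hg =>
    exact Partrec.bind hg (hf.comp (Computable.fst.comp Computable.fst) Computable.snd).to₂
  | prec cf cg hf hg =>
    have u : Computable fun p : List Bool × ℕ => p.2.unpair := Computable.unpair.comp Computable.snd
    have h1 : Partrec fun p : List Bool × ℕ => evalS p.1 cf p.2.unpair.1 :=
      hf.comp Computable.fst (Computable.fst.comp u)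
    have h2 : Partrec₂ fun (p : List Bool × ℕ) (q : ℕ × ℕ) =>
        evalS p.1 cg (Nat.pair p.2.unpair.1 (Nat.pair q.1 q.2)) := by
      refine hg.comp (Computable.fst.comp Computable.fst) ?_
      refine Primrec₂.natPair.to_comp.comp ((Computable.fst.comp u).comp Computable.fst) ?_
      exact Primrec₂.natPair.to_comp.comp (Computable.fst.comp Computable.snd)
        (Computable.snd.comp Computable.snd)
    exact Partrec.nat_rec (Computable.snd.comp u) h1 h2
  | rfind' cf hf =>
    have u : Computable fun p : List Bool × ℕ => p.2.unpair := Computable.unpair.comp Computable.snd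
    have u1 : Computable fun q : (List Bool × ℕ) × ℕ =>
        Nat.pair q.1.2.unpair.1 (q.2 + q.1.2.unpair.2) :=
      Primrec₂.natPair.to_comp.comp ((Computable.fst.comp u).comp Computable.fst)
        (Primrec.nat_add.to_comp.comp Computable.snd ((Computable.snd.comp u).comp Computable.fst))
    have h1 : Partrec₂ fun (p : List Bool × ℕ) (n : ℕ) =>
        evalS p.1 cf (Nat.pair p.2.unpair.1 (n + p.2.unpair.2)) :=
      hf.comp (Computable.fst.comp Computable.fst) u1
    exact partrec_rfind_step h1 (Computable.snd.comp u)

def OA (c : CodeO) (τ σ : List Bool) : Prop :=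
  ∀ i < τ.length, ∃ v ∈ evalS σ c i, (τ[i]?.map fun b => cond b 1 0) = some v

theorem good_OA (c : CodeO) : Good (OA c) where
  re := by
    have hq : PrimrecPred fun q : (ℕ × List Bool × List Bool) × ℕ =>
        (q.1.2.1[q.1.1]?.map fun b => cond b 1 0) = some q.2 := by
      refine Primrec.eq.comp (Primrec.option_map (Primrec.list_getElem?.comp
        (Primrec.fst.comp (Primrec.snd.comp Primrec.fst)) (Primrec.fst.comp Primrec.fst))
        (Primrec.cond Primrec.snd (Primrec.const 1) (Primrec.const 0)).to₂)
        (Primrec.option_some.comp Primrec.snd)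
    have h1 : REPred fun r : ℕ × List Bool × List Bool =>
        ∃ v ∈ evalS r.2.2 c r.1, (r.2.1[r.1]?.map fun b => cond b 1 0) = some v :=
      re_bind ((evalS_partrec c).comp (Computable.snd.comp Computable.snd) Computable.fst)
        (re_of_primrecPred hq)
    exact re_comp (re_forall_lt h1) (f := fun p : List Bool × List Bool => (p.1.length, p))
      ((Computable.list_length.comp Computable.fst).pair Computable.id)
  down := by
    rintro τ τ' σ ⟨u, rfl⟩ h i hi
    obtain ⟨v, h1, h2⟩ := h i (by simp; omega)
    exact ⟨v, h1, by rwa [List.getElem?_append_left hi] at h2⟩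
  compat := by
    intro τ τ' σ σ' h h1 h2
    have key : ∀ i (hi : i < τ.length) (hi' : i < τ'.length), τ[i] = τ'[i] := by
      intro i hi hi'
      obtain ⟨v, hv, e⟩ := h1 i hi
      obtain ⟨v', hv', e'⟩ := h2 i hi'
      rw [Part.mem_unique (evalS_mono h _ _ _ hv) hv', ← e'] at e
      rw [List.getElem?_eq_getElem hi, List.getElem?_eq_getElem hi'] at e
      revert e
      cases τ[i] <;> cases τ'[i] <;> simp
    rcases le_total τ.length τ'.length with hl | hl
    · left
      rw [prefix_iff_take]
      apply List.ext_getElem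
      · simpa using hl
      · intro i h3 h4
        rw [List.getElem_take]
        exact (key i h4 (by omega)).symm
    · right
      rw [prefix_iff_take]
      apply List.ext_getElem
      · simpa using hl
      · intro i h3 h4
        rw [List.getElem_take]
        exact key i (by omega) h4

theorem mem_V_OA (c : CodeO) (X g : Cantor) (k : ℕ) :
    X ∈ V (OA c) (initSeg g k) ↔ ∀ i < k, cond (g i) 1 0 ∈ evalO X c i := by
  have hget : ∀ i < k, ((initSeg g k)[i]?.map fun b => cond b 1 0) = some (cond (g i) 1 0) := by
    intro i hi
    simp [initSeg, hi]
  constructor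
  · rintro ⟨n, h⟩ i hi
    obtain ⟨v, hv, e⟩ := h i (by simpa using hi)
    rw [hget i hi] at e
    rw [Option.some.inj e]
    exact evalS_sound X n c i v hv
  · intro h
    choose! s hs using fun i hi => evalS_use X c i _ (h i hi)
    refine ⟨(Finset.range k).sup s, fun i hi => ?_⟩
    rw [initSeg_length] at hi
    refine ⟨_, evalS_mono (initSeg_prefix X ?_) _ _ _ (hs i hi), hget i hi⟩
    exact Finset.le_sup (f := s) (Finset.mem_range.2 hi)

theorem oracle_cof (c : CodeO) : {X : Cantor | ∃ A : Set ℕ, Aᶜ.Finite ∧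
      ∀ n, evalO X c n = Part.some (if n ∈ A then 1 else 0)} =
    {X | ∃ g : Cantor, (∀ k, X ∈ V (OA c) (initSeg g k)) ∧ ∃ t, ∀ k, t ≤ k → g k = true} := by
  ext X
  simp only [mem_V_OA, Set.mem_ofPred_eq]
  constructor
  · rintro ⟨S, hS, h⟩
    refine ⟨fun n => decide (n ∈ S), fun k i _ => ?_, ?_⟩
    · rw [h i]
      by_cases hi : i ∈ S <;> simp [hi]
    · obtain ⟨t, ht⟩ := hS.bddAbove
      refine ⟨t + 1, fun k hk => ?_⟩
      by_contra hc
      have : k ∈ Sᶜ := by simpa using hc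
      have := ht this
      omega
  · rintro ⟨g, hg, t, ht⟩
    refine ⟨{n | g n = true}, ?_, fun n => ?_⟩
    · refine (Set.finite_lt_nat t).subset fun n hn => ?_
      by_contra hc
      exact hn (ht n (not_lt.1 hc))
    · rw [Part.eq_some_iff]
      have := hg (n + 1) n (Nat.lt_succ_self n)
      cases h : g n <;> simpa [h] using this

end RandProb

namespace RandProb

/-- **Limits on randomness of computable/cofinite outcomes of oracle and monotone machines.**
For any oracle machine, the probability that it computes the characteristic function of a
cofinite set is not 3-random; for any monotone machine, the probability that the output is
a stream of the form `σ∗1^ω` (respectively, a computable stream) is not 3-random. -/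
theorem cofinite_outcome_not_three_random :
    (∀ c : CodeO,
        ¬ NRandom 3 (muR {X : Cantor | ∃ A : Set ℕ, Aᶜ.Finite ∧
          ∀ n, evalO X c n = Part.some (if n ∈ A then 1 else 0)})) ∧
    (∀ N : MonoMachine,
        ¬ NRandom 3 (muR {X : Cantor | X ∈ MonoINF N ∧
          ∃ t, ∀ k, t ≤ k → N.hasBit X k true})) ∧
    (∀ N : MonoMachine,
        ¬ NRandom 3 (muR {X : Cantor | X ∈ MonoINF N ∧
          ∃ g : ℕ → Bool, Computable g ∧ ∀ k, N.hasBit X k (g k)})) := by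
  refine ⟨fun c => ?_, fun N => ?_, fun N => ?_⟩
  · rw [oracle_cof c]
    exact not_random_cof (good_OA c)
  · rw [mono_cof N]
    exact not_random_cof (good_MA N)
  · rw [mono_comp N]
    exact not_random_CompS (good_MA N)

end RandProb
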